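/- arXiv:1909.10126 — 8 statements merged into one kernel-verified Lean document; each statement's English description precedes it below -/
import Mathlib

section
/- Let k ≥ 3 be an integer and let G be a finite group of odd order. Then there are infinitely many positive integers v for which there exists a 2-(v,k,1)-design whose automorphism group contains a 1-blocked subgroup isomorphic to G. -/
/-!
The points are the functions `G → F` with `F = ZMod p`, and `G` permutes the coordinates.

*Base block.* By Dirichlet's theorem there are arbitrarily large primes `p = k(k-1)t + 1` with `t`
odd and divisible by `|G|`. For large `p` there are `b₁, …, bₖ ∈ F` whose `k(k-1)` differences
`bⱼ - bᵢ` lie one in each coset of the group of `t`-th roots of unity, so that their `t`-th powers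
are exactly the `t`-th powers of units, each occurring once (`exists_base`). As `-1` is not a `t`-th
root of unity, it suffices to prescribe the cosets of the differences with `i < j`. Such `bᵢ` are
found greedily (`embed`), because the graph joining `x` to `x + ah` (`h` in a subgroup) is
pseudorandom: a second moment bound (`moment_bound`), proved by averaging over all dilates of the
graph, shows that few vertices have too few neighbours in a given large set (`bad_bound`).

*Blocks.* Elements `c` of `Fˣ` with `c • w = g • w` for some `g ∈ G` and `w ≠ 0` satisfy
`c ^ |G| = 1`, hence `c ^ t = 1`. So there is a `G`-invariant map `φ` from nonzero vectors to the
`t`-th powers with `φ (c • w) = c ^ t * φ w` (`exists_phi`). The blocks are the sets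
`{x + bᵢ • e : i}` with `e ≠ 0` and `φ e = 1`. For `y ≠ z`, the value `φ (z - y)` determines the only
`(i, j)` for which `z - y` can be `(bⱼ - bᵢ) • e`, and then `e` and `x`: so every pair lies in one
block, and a block determines its parameters `(x, e)`. An element of `G` that fixes a block
therefore fixes `x` and `e`, hence every point of the block (`main_design`).
-/

/-- A `2`-`(v,k,1)` design on a point type `α` (with `v` the cardinality of `α`):
a collection of `k`-element subsets (blocks) such that any two distinct points
lie in exactly one block. -/
structure Design (α : Type) [DecidableEq α] (k : ℕ) where
  blocks : Finset (Finset α)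
  blockSize : ∀ B ∈ blocks, B.card = k
  pairCover : ∀ x y : α, x ≠ y → ∃! B, B ∈ blocks ∧ x ∈ B ∧ y ∈ B

/-- `g` is an automorphism of the design `D`: it permutes the point set and maps
the collection of blocks onto itself. -/
def IsAuto {α : Type} [DecidableEq α] {k : ℕ} (D : Design α k)
    (g : Equiv.Perm α) : Prop :=
  ∀ B : Finset α, B ∈ D.blocks ↔ B.image g ∈ D.blocks

/-! ### Pseudorandomness of multiplicative cosets -/

/-- Pseudorandomness of the Cayley graph with connection set `aT`: its adjacency operator has norm at
most `√|F|` on functions of mean zero. The left side is unchanged when `a` moves within its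
`T`-coset, so `|T|` times it is at most its sum over all `a : Fˣ`, in which each cross term `h ≠ h'` runs
over all pairs of distinct points and contributes `-∑ f²`. -/
lemma moment_bound {F : Type} [Field F] [Fintype F] [DecidableEq F] (T : Subgroup Fˣ)
    [Fintype T] (f : F → ℝ) (hf : ∑ x, f x = 0) (a : Fˣ) :
    ∑ x, (∑ h : T, f (x + a * (h : Fˣ))) ^ 2 ≤ Fintype.card F * ∑ x, f x ^ 2 := by
  classical
  set S : Fˣ → ℝ := fun c => ∑ x, (∑ h : T, f (x + c * (h : Fˣ))) ^ 2 with hS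
  set P : ℝ := ∑ x, f x ^ 2 with hP
  have hP0 : 0 ≤ P := Finset.sum_nonneg fun x _ => sq_nonneg _
  have hS0 : ∀ c, 0 ≤ S c := fun c => Finset.sum_nonneg fun x _ => sq_nonneg _
  have hinv : ∀ h0 : T, S (a * h0) = S a := by
    intro h0
    refine Finset.sum_congr rfl fun x _ => ?_
    congr 1
    refine Fintype.sum_equiv (Equiv.mulLeft h0) _ _ fun h => ?_
    simp [mul_assoc]
  have hlow : (Fintype.card T : ℝ) * S a ≤ ∑ c, S c := by
    have h1 : (Fintype.card T : ℝ) * S a = ∑ h0 : T, S (a * h0) := by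
      simp [hinv]
    have hinj : Function.Injective fun h0 : T => a * (h0 : Fˣ) := fun x y hxy =>
      Subtype.ext (mul_left_cancel hxy)
    rw [h1, ← Finset.sum_image (f := S) (g := fun h0 : T => a * (h0 : Fˣ))
      (fun x _ y _ hxy => hinj hxy)]
    exact Finset.sum_le_sum_of_subset_of_nonneg (Finset.subset_univ _) fun c _ _ => hS0 c
  have hcorr : ∀ h h' : T, ∑ c : Fˣ, ∑ x, f (x + c * (h : Fˣ)) * f (x + c * (h' : Fˣ))
      ≤ if h = h' then Fintype.card F * P else 0 := by
    intro h h'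
    split_ifs with e
    · subst e
      have : ∀ c : Fˣ, ∑ x, f (x + c * (h : Fˣ)) * f (x + c * (h : Fˣ)) = P := by
        intro c
        refine Fintype.sum_equiv (Equiv.addRight ((c : F) * (h : Fˣ))) _ _ fun x => ?_
        simp [sq]
      simp only [this, Finset.sum_const, Finset.card_univ, nsmul_eq_mul]
      gcongr
      exact Fintype.card_le_of_injective _ Units.val_injective
    · have hd : ((h' : Fˣ) : F) - ((h : Fˣ) : F) ≠ 0 := by
        intro h0
        exact e (Subtype.ext (Units.ext (sub_eq_zero.1 h0).symm))
      set d : Fˣ := Units.mk0 _ hd with hdd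
      have h1 : ∀ c : Fˣ, ∑ x, f (x + c * (h : Fˣ)) * f (x + c * (h' : Fˣ))
          = ∑ x, f x * f (x + (c * d : Fˣ)) := by
        intro c
        refine Fintype.sum_equiv (Equiv.addRight ((c : F) * (h : Fˣ))) _ _ fun x => ?_
        simp only [Equiv.coe_addRight]
        congr 2
        simp [hdd]; ring
      have h2 : ∀ x, ∑ c : Fˣ, f (x + c) = - f x := by
        intro x
        have h3 : ∑ y, f (x + y) = 0 := by
          rw [← hf]
          exact Fintype.sum_equiv (Equiv.addLeft x) _ _ fun _ => rfl
        have h4 : ∑ y, f (x + y) = f (x + 0) + ∑ c : Fˣ, f (x + c) := by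
          rw [← Finset.add_sum_erase _ _ (Finset.mem_univ (0 : F))]
          congr 1
          symm
          refine Finset.sum_bij (fun c _ => (c : F)) ?_ ?_ ?_ ?_
          · intro c _; simp
          · intro c _ c' _ hc; exact Units.ext hc
          · intro y hy
            exact ⟨Units.mk0 y (by simpa using hy), by simp, rfl⟩
          · intro c _; rfl
        rw [add_zero] at h4
        linarith
      calc ∑ c : Fˣ, ∑ x, f (x + c * (h : Fˣ)) * f (x + c * (h' : Fˣ))
          = ∑ c : Fˣ, ∑ x, f x * f (x + (c * d : Fˣ)) := by simp only [h1]
        _ = ∑ c : Fˣ, ∑ x, f x * f (x + (c : Fˣ)) :=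
            Fintype.sum_equiv (Equiv.mulRight d) _ _ fun c => rfl
        _ = ∑ x, f x * ∑ c : Fˣ, f (x + (c : Fˣ)) := by
            rw [Finset.sum_comm]; simp only [Finset.mul_sum]
        _ = - P := by simp [h2, hP, sq]
        _ ≤ 0 := by linarith
  have hup : ∑ c, S c ≤ (Fintype.card T : ℝ) * (Fintype.card F * P) := by
    have h1 : ∑ c, S c
        = ∑ h : T, ∑ h' : T, ∑ c : Fˣ, ∑ x, f (x + c * (h : Fˣ)) * f (x + c * (h' : Fˣ)) := by
      simp only [hS, sq, Finset.sum_mul_sum]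
      have : ∀ c : Fˣ, ∑ x, ∑ h : T, ∑ h' : T, f (x + c * (h : Fˣ)) * f (x + c * (h' : Fˣ))
          = ∑ h : T, ∑ h' : T, ∑ x, f (x + c * (h : Fˣ)) * f (x + c * (h' : Fˣ)) := by
        intro c
        rw [Finset.sum_comm]
        exact Finset.sum_congr rfl fun h _ => Finset.sum_comm
      simp only [this]
      rw [Finset.sum_comm]
      exact Finset.sum_congr rfl fun h _ => Finset.sum_comm
    rw [h1]
    refine (Finset.sum_le_sum fun h _ => Finset.sum_le_sum fun h' _ => hcorr h h').trans ?_
    simp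
  have hT : (0 : ℝ) < Fintype.card T := by exact_mod_cast Fintype.card_pos
  exact le_of_mul_le_mul_left (hlow.trans hup) hT

/-- The neighbours of `x` in `V`, where `y` is a neighbour of `x` when `y - x` lies in the coset
`aT`. -/
noncomputable def cosetNbrs {F : Type} [Field F] [Fintype F] (T : Subgroup Fˣ) (V : Finset F) (a : Fˣ) (x : F) :
    Finset F :=
  open Classical in V.filter fun y => ∃ h ∈ T, y - x = ((a * h : Fˣ) : F)

/-- Few points `x` have less than half of the expected number `|V| / M` of neighbours in `V`, when
`T` has index `M`: this is Chebyshev's inequality applied to `moment_bound`. -/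
lemma bad_bound {F : Type} [Field F] [Fintype F] [DecidableEq F] (T : Subgroup Fˣ) (M : ℕ)
    (hM : 0 < M) (hT : Nat.card T * M + 1 = Fintype.card F) (hq : 4 ≤ Fintype.card F)
    (V : Finset F) (a : Fˣ) :
    ((Finset.univ.filter fun x => 2 * M * (cosetNbrs T V a x).card < V.card).card : ℝ) * V.card
      ≤ 16 * M ^ 2 * Fintype.card F := by
  classical
  set q : ℝ := (Fintype.card F : ℝ) with hqd
  set W := Finset.univ.filter fun x => 2 * M * (cosetNbrs T V a x).card < V.card with hW
  have hq4 : (4 : ℝ) ≤ q := by rw [hqd]; exact_mod_cast hq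
  have hM' : (0 : ℝ) < M := by exact_mod_cast hM
  set v : ℝ := (V.card : ℝ) with hv
  rcases Nat.eq_zero_or_pos V.card with h0 | hpos
  · rw [hv, h0]; simp; positivity
  have hv0 : 0 < v := by rw [hv]; exact_mod_cast hpos
  set f : F → ℝ := fun x => (if x ∈ V then 1 else 0) - v / q with hfd
  have hf : ∑ x, f x = 0 := by
    simp only [hfd, Finset.sum_sub_distrib, Finset.sum_const, Finset.card_univ, nsmul_eq_mul]
    rw [← hqd]
    simp
    field_simp
    simp [hv]
  have hf2 : ∑ x, f x ^ 2 ≤ v := by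
    have : ∀ x, f x ^ 2 = (if x ∈ V then 1 else 0) - v / q * (2 * (f x) + v / q) := by
      intro x
      simp only [hfd]
      split_ifs <;> ring
    simp only [this, Finset.sum_sub_distrib, ← Finset.mul_sum, Finset.sum_add_distrib, hf]
    have h1 : (∑ x : F, if x ∈ V then (1 : ℝ) else 0) = v := by simp [hv]
    rw [h1]
    have : 0 ≤ v / q * (2 * 0 + ∑ i : F, v / q) := by positivity
    linarith
  have hm := moment_bound T f hf a
  have hdeg : ∀ x, ∑ h : T, f (x + a * (h : Fˣ))
      = (cosetNbrs T V a x).card - Nat.card T * (v / q) := by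
    intro x
    simp only [hfd, Finset.sum_sub_distrib, Finset.sum_const, Finset.card_univ, nsmul_eq_mul,
      Nat.card_eq_fintype_card]
    congr 1
    rw [Finset.sum_boole]
    norm_cast
    refine Finset.card_bij (fun h _ => x + a * (h : Fˣ)) ?_ ?_ ?_
    · intro h hh
      simp only [Finset.mem_filter, Finset.mem_univ, true_and] at hh
      simp only [cosetNbrs, Finset.mem_filter]
      exact ⟨hh, h, h.2, by simp⟩
    · intro h _ h' _ e
      have := mul_left_cancel₀ a.ne_zero (add_left_cancel e)
      exact Subtype.ext (Units.ext this)
    · intro y hy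
      simp only [cosetNbrs, Finset.mem_filter] at hy
      obtain ⟨hyV, h, hh, e⟩ := hy
      have e' : x + a * h = y := by rw [← sub_add_cancel y x, e]; push_cast; ring
      exact ⟨⟨h, hh⟩, by simp [e', hyV], e'⟩
  have hTq : (Nat.card T : ℝ) * M + 1 = q := by rw [hqd]; exact_mod_cast hT
  have hbad : ∀ x ∈ W, v ^ 2 ≤ 16 * M ^ 2 * (∑ h : T, f (x + a * (h : Fˣ))) ^ 2 := by
    intro x hx
    have hx' : 2 * (M : ℝ) * (cosetNbrs T V a x).card < v := by
      have := (Finset.mem_filter.1 hx).2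
      rw [hv]
      exact_mod_cast this
    rw [hdeg]
    have h1 : (Nat.card T : ℝ) * M * (v / q) = v - v / q := by
      have : (Nat.card T : ℝ) * M = q - 1 := by linarith
      rw [this]; field_simp
    have h2 : v / q ≤ v / 4 := by gcongr
    set dd : ℝ := ((cosetNbrs T V a x).card : ℝ)
    have h3 : v ≤ 4 * M * (Nat.card T * (v / q) - dd) := by nlinarith
    calc v ^ 2 ≤ (4 * M * (Nat.card T * (v / q) - dd)) ^ 2 := by gcongr
      _ = _ := by ring
  have hsum : (W.card : ℝ) * v ^ 2 ≤ 16 * M ^ 2 * (q * v) := by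
    calc (W.card : ℝ) * v ^ 2 = ∑ x ∈ W, v ^ 2 := by simp
      _ ≤ ∑ x ∈ W, 16 * M ^ 2 * (∑ h : T, f (x + a * (h : Fˣ))) ^ 2 := Finset.sum_le_sum hbad
      _ ≤ ∑ x, 16 * M ^ 2 * (∑ h : T, f (x + a * (h : Fˣ))) ^ 2 :=
          Finset.sum_le_sum_of_subset_of_nonneg (Finset.subset_univ _) fun _ _ _ => by positivity
      _ = 16 * M ^ 2 * ∑ x, (∑ h : T, f (x + a * (h : Fˣ))) ^ 2 := by rw [Finset.mul_sum]
      _ ≤ 16 * M ^ 2 * (q * v) := by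
          gcongr
          exact hm.trans (by gcongr)
  nlinarith

lemma mem_cosetNbrs {F : Type} [Field F] [Fintype F] {T : Subgroup Fˣ} {V : Finset F} {a : Fˣ}
    {x y : F} :
    y ∈ cosetNbrs T V a x ↔ y ∈ V ∧ ∃ h ∈ T, y - x = ((a * h : Fˣ) : F) := by
  classical
  simp [cosetNbrs]

/-! ### Points with prescribed difference cosets -/

/-- Over a large field, a subgroup `T` of index `M`, cosets `a i j * T` and sets `V i` of density at
least `δ` have representatives `b i ∈ V i` with every difference `b j - b i`, `i < j`, in the
prescribed coset. The first point is chosen so that each later set keeps a proportion `1 / (2M)`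
among its neighbours, and the induction continues inside these neighbourhoods. -/
lemma embed (M : ℕ) (hM : 0 < M) (n : ℕ) : ∀ δ : ℝ, 0 < δ → ∃ Q : ℕ,
    ∀ (F : Type) [Field F] [Fintype F] [DecidableEq F], Q ≤ Fintype.card F →
    ∀ T : Subgroup Fˣ, Nat.card T * M + 1 = Fintype.card F →
    ∀ (a : ℕ → ℕ → Fˣ) (V : ℕ → Finset F),
      (∀ i < n, δ * Fintype.card F ≤ (V i).card) →
      ∃ b : ℕ → F, (∀ i < n, b i ∈ V i) ∧
        ∀ i j, i < j → j < n → ∃ h ∈ T, b j - b i = ((a i j * h : Fˣ) : F) := by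
  induction n with
  | zero =>
    intro δ _
    exact ⟨0, fun F _ _ _ _ T _ a V _ => ⟨fun _ => 0, by simp, by simp⟩⟩
  | succ n ih =>
    intro δ hδ
    have hM' : (0 : ℝ) < M := by exact_mod_cast hM
    obtain ⟨Q, hQ⟩ := ih (δ / (2 * M)) (by positivity)
    obtain ⟨R, hR⟩ := exists_nat_gt (n * (16 * M ^ 2 / δ) / δ)
    refine ⟨max Q (max R 4), ?_⟩
    intro F _ _ _ hF T hT a V hV
    have hFQ : Q ≤ Fintype.card F := (le_max_left _ _).trans hF
    have hFR : R ≤ Fintype.card F := ((le_max_left _ _).trans (le_max_right _ _)).trans hF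
    have hF4 : 4 ≤ Fintype.card F := ((le_max_right _ _).trans (le_max_right _ _)).trans hF
    have hq0 : (0 : ℝ) < Fintype.card F := by
      have : 0 < Fintype.card F := by omega
      exact_mod_cast this
    let W : ℕ → Finset F := fun j =>
      Finset.univ.filter fun x => 2 * M * (cosetNbrs T (V (j + 1)) (a 0 (j + 1)) x).card
        < (V (j + 1)).card
    have hW : ∀ j < n, ((W j).card : ℝ) ≤ 16 * M ^ 2 / δ := by
      intro j hj
      have h1 := bad_bound T M hM hT hF4 (V (j + 1)) (a 0 (j + 1))
      have h2 := hV (j + 1) (by omega)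
      rw [le_div_iff₀ hδ]
      have h3 : ((W j).card : ℝ) * (δ * Fintype.card F) ≤ 16 * M ^ 2 * Fintype.card F :=
        le_trans (by gcongr) h1
      rw [← mul_assoc] at h3
      exact le_of_mul_le_mul_right h3 hq0
    have hU : (((Finset.range n).biUnion W).card : ℝ) < (V 0).card := by
      calc (((Finset.range n).biUnion W).card : ℝ) ≤ ∑ j ∈ Finset.range n, ((W j).card : ℝ) := by
            exact_mod_cast Finset.card_biUnion_le
        _ ≤ ∑ j ∈ Finset.range n, 16 * (M : ℝ) ^ 2 / δ :=
            Finset.sum_le_sum fun j hj => hW j (Finset.mem_range.1 hj)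
        _ = n * (16 * M ^ 2 / δ) := by simp
        _ < δ * R := by rw [div_lt_iff₀ hδ] at hR; linarith
        _ ≤ δ * Fintype.card F := by gcongr
        _ ≤ (V 0).card := hV 0 (by omega)
    obtain ⟨x, hx0, hxW⟩ := Finset.exists_mem_notMem_of_card_lt_card
      (s := (Finset.range n).biUnion W) (t := V 0) (by exact_mod_cast hU)
    have hgood : ∀ j < n, (V (j + 1)).card
        ≤ 2 * M * (cosetNbrs T (V (j + 1)) (a 0 (j + 1)) x).card := by
      intro j hj
      by_contra hlt
      exact hxW (Finset.mem_biUnion.2 ⟨j, Finset.mem_range.2 hj, by simpa [W] using hlt⟩)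
    obtain ⟨b, hb, hb'⟩ := hQ F hFQ T hT (fun i j => a (i + 1) (j + 1))
      (fun j => cosetNbrs T (V (j + 1)) (a 0 (j + 1)) x) (by
        intro j hj
        have h1 := hV (j + 1) (by omega)
        have h2 : ((V (j + 1)).card : ℝ)
          ≤ 2 * M * (cosetNbrs T (V (j + 1)) (a 0 (j + 1)) x).card := by
            exact_mod_cast hgood j hj
        rw [div_mul_eq_mul_div, div_le_iff₀ (by positivity)]
        linarith)
    refine ⟨fun m => Nat.casesOn m x b, ?_, ?_⟩
    · rintro (_ | i) hi
      · exact hx0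
      · exact (mem_cosetNbrs.1 (hb i (by omega))).1
    · rintro (_ | i) (_ | j) hij hj
      · omega
      · exact (mem_cosetNbrs.1 (hb j (by omega))).2
      · omega
      · exact hb' i j (by omega) (by omega)

/-! ### The base block -/

/-- A base block: the `t`-th powers of the differences of distinct elements are exactly the `t`-th
powers of units, each attained by one ordered pair. -/
lemma exists_base (k : ℕ) (hk : 2 ≤ k) (m : ℕ) (hm : Odd m) (N : ℕ) :
    ∃ p > N, ∃ _ : Fact p.Prime, ∃ t, Odd t ∧ m ∣ t ∧ ∃ b : Fin k → ZMod p,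
      ∀ c : (ZMod p)ˣ, ∃! ij : Fin k × Fin k, ij.1 ≠ ij.2 ∧
        (b ij.2 - b ij.1) ^ t = (c : ZMod p) ^ t := by
  classical
  set M := k.choose 2 with hMd
  have hM : 0 < M := Nat.choose_pos hk
  have h2M : 2 * M = k * (k - 1) := by
    rw [hMd, Nat.choose_two_right, Nat.mul_div_cancel' (Nat.even_mul_pred_self k).two_dvd]
  obtain ⟨Q, hQ⟩ := embed (2 * M) (by omega) k 1 one_pos
  have hm0 : 0 < m := hm.pos
  -- The modulus `2 * (2 * M * m)` makes `(p - 1) / (2 * M)` an odd multiple of `m`.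
  obtain ⟨p, hpN, hp, hmod⟩ := Nat.forall_exists_prime_gt_and_modEq (max N (max Q (2 * M * m + 1)))
    (q := 2 * (2 * M * m)) (a := 2 * M * m + 1) (by positivity) (by
      refine Nat.Coprime.mul_right ?_ ?_
      · rw [Nat.coprime_two_right]
        exact ⟨M * m, by ring⟩
      · simp)
  have hpN' : N < p := lt_of_le_of_lt (le_max_left _ _) hpN
  have hpQ : Q < p := lt_of_le_of_lt ((le_max_left _ _).trans (le_max_right _ _)) hpN
  have hpM : 2 * M * m + 1 < p := lt_of_le_of_lt ((le_max_right _ _).trans (le_max_right _ _)) hpN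
  obtain ⟨s, hs⟩ := (Nat.modEq_iff_dvd' hpM.le).1 hmod.symm
  set t := m * (1 + 2 * s) with ht
  have hpt : t * (2 * M) + 1 = p := by
    have : p = 2 * (2 * M * m) * s + (2 * M * m + 1) := by omega
    rw [this, ht]; ring
  have htodd : Odd t := hm.mul ⟨s, by ring⟩
  have ht0 : 0 < t := htodd.pos
  have : Fact p.Prime := ⟨hp⟩
  refine ⟨p, hpN', ⟨hp⟩, t, htodd, ⟨_, ht⟩, ?_⟩
  obtain ⟨ζ, hζ⟩ := IsCyclic.exists_generator (α := (ZMod p)ˣ)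
  have hζo : orderOf ζ = t * (2 * M) := by
    rw [orderOf_eq_card_of_forall_mem_zpowers hζ, Nat.card_eq_fintype_card, ZMod.card_units]
    omega
  set T : Subgroup (ZMod p)ˣ := Subgroup.zpowers (ζ ^ (2 * M)) with hTd
  have hTcard : Nat.card T = t := by
    rw [hTd, Nat.card_zpowers, orderOf_pow_of_dvd (by omega) (by rw [hζo]; exact ⟨t, by ring⟩), hζo]
    exact Nat.mul_div_cancel _ (by omega)
  have hTt : ∀ h ∈ T, h ^ t = 1 := by
    intro h hh
    have : (⟨h, hh⟩ : T) ^ t = 1 := by rw [← hTcard]; exact pow_card_eq_one'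
    simpa using congrArg Subtype.val this
  set η := ζ ^ t with hη
  have hηo : orderOf η = 2 * M := by
    rw [hη, orderOf_pow_of_dvd (by omega) (by rw [hζo]; exact ⟨2 * M, rfl⟩), hζo]
    exact Nat.mul_div_cancel_left _ ht0
  have hηM : η ^ M = -1 := by
    have h1 : η ^ M ≠ 1 := fun h => by
      have := Nat.le_of_dvd hM (orderOf_dvd_of_pow_eq_one h)
      omega
    have h2 : ((η ^ M : (ZMod p)ˣ) : ZMod p) ^ 2 = 1 := by
      rw [← Units.val_pow_eq_pow_val, ← pow_mul, mul_comm M 2, ← hηo, pow_orderOf_eq_one,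
        Units.val_one]
    rcases eq_or_eq_neg_of_sq_eq_sq _ 1 (h2.trans (one_pow 2).symm) with h | h
    · exact absurd (Units.ext h) h1
    · exact Units.ext (by simpa using h)
  obtain ⟨b, -, hb⟩ := hQ (ZMod p) (by rw [ZMod.card]; exact hpQ.le) T
    (by rw [hTcard, ZMod.card, hpt]) (fun i j => ζ ^ (j.choose 2 + i)) (fun _ => Finset.univ)
    (by simp)
  -- `(bⱼ - bᵢ) ^ t` will be `η ^ E (i, j)`. Pairs `i < j` are numbered `0, …, M - 1` in colexicographic
  -- order, and reversing a pair adds `M` because `η ^ M = -1`.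
  let E : Fin k × Fin k → ℕ := fun ij => if ij.1 < ij.2 then (ij.2 : ℕ).choose 2 + ij.1
    else M + ((ij.1 : ℕ).choose 2 + ij.2)
  have hlt : ∀ i j : ℕ, i < j → j.choose 2 + i < (j + 1).choose 2 := by
    intro i j hij
    rw [Nat.choose_succ_succ' j 1, Nat.choose_one_right, Nat.add_comm]
    exact Nat.add_lt_add_right hij _
  have hltM : ∀ i j : ℕ, i < j → j < k → j.choose 2 + i < M := fun i j hij hj =>
    (hlt i j hij).trans_le (Nat.choose_le_choose 2 hj)
  have hidx : ∀ i j i' j' : ℕ, i < j → i' < j' → j.choose 2 + i = j'.choose 2 + i' →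
      i = i' ∧ j = j' := by
    intro i j i' j' h h' e
    rcases lt_trichotomy j j' with hjj | hjj | hjj
    · have := hlt i j h
      have := Nat.choose_le_choose 2 (show j + 1 ≤ j' from hjj)
      omega
    · subst hjj; omega
    · have := hlt i' j' h'
      have := Nat.choose_le_choose 2 (show j' + 1 ≤ j from hjj)
      omega
  have hElt : ∀ ij : Fin k × Fin k, ij.1 ≠ ij.2 → E ij < 2 * M := by
    rintro ⟨i, j⟩ hij
    simp only [E]
    split_ifs with h
    · have := hltM i j h j.2; omega
    · have := hltM j i (lt_of_le_of_ne (not_lt.1 h) fun e => hij (Fin.ext e.symm)) i.2; omega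
  have hEinj : ∀ ij ij' : Fin k × Fin k, ij.1 ≠ ij.2 → ij'.1 ≠ ij'.2 → E ij = E ij' →
      ij = ij' := by
    rintro ⟨i, j⟩ ⟨i', j'⟩ hij hij' e
    simp only [E] at e hij hij'
    split_ifs at e with h h' h'
    · have := hidx i j i' j' h h' e
      ext <;> simp [this]
    · have := hltM i j h j.2; omega
    · have := hltM i' j' h' j'.2; omega
    · have := hidx j i j' i' (lt_of_le_of_ne (not_lt.1 h) fun e => hij (Fin.ext e.symm))
        (lt_of_le_of_ne (not_lt.1 h') fun e => hij' (Fin.ext e.symm)) (by omega)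
      ext <;> simp [this]
  have hbt : ∀ i j : ℕ, i < j → j < k →
      (b j - b i) ^ t = ((η ^ (j.choose 2 + i) : (ZMod p)ˣ) : ZMod p) := by
    intro i j hij hj
    obtain ⟨h, hh, e⟩ := hb i j hij hj
    rw [e, ← Units.val_pow_eq_pow_val, mul_pow, hTt h hh, mul_one, hη, ← pow_mul, ← pow_mul,
      mul_comm t]
  have hE : ∀ ij : Fin k × Fin k, ij.1 ≠ ij.2 →
      (b ij.2 - b ij.1) ^ t = ((η ^ E ij : (ZMod p)ˣ) : ZMod p) := by
    rintro ⟨i, j⟩ hij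
    simp only [E]
    split_ifs with h
    · exact hbt i j h j.2
    · have h' : j < i := lt_of_le_of_ne (not_lt.1 h) (Ne.symm hij)
      rw [← neg_sub, htodd.neg_pow, hbt j i h' i.2, pow_add η M, hηM]
      simp
  have hinj : Set.InjOn (fun ij => η ^ E ij)
      ((Finset.univ : Finset (Fin k)).offDiag : Set (Fin k × Fin k)) := by
    intro ij h ij' h' e
    simp only [Finset.mem_coe, Finset.mem_offDiag, Finset.mem_univ, true_and] at h h'
    refine hEinj ij ij' h h' (pow_injOn_Iio_orderOf (x := η) ?_ ?_ e)
    · rw [hηo]; exact hElt ij h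
    · rw [hηo]; exact hElt ij' h'
  -- The powers are distinct, and as many as the solutions of `u ^ (2 * M) = 1`.
  have himg : (Finset.univ : Finset (Fin k)).offDiag.image (fun ij => η ^ E ij)
      = Finset.univ.filter fun u : (ZMod p)ˣ => u ^ (2 * M) = 1 := by
    refine Finset.eq_of_subset_of_card_le ?_ ?_
    · intro u hu
      obtain ⟨ij, -, rfl⟩ := Finset.mem_image.1 hu
      simp only [Finset.mem_filter, Finset.mem_univ, true_and]
      rw [← pow_mul, mul_comm, pow_mul, ← hηo, pow_orderOf_eq_one, one_pow]
    · rw [Finset.card_image_of_injOn hinj, Finset.offDiag_card]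
      refine (IsCyclic.card_pow_eq_one_le (by omega)).trans ?_
      rw [h2M]; simp [Nat.mul_sub]
  refine ⟨fun i => b i, fun c => ?_⟩
  have hc : c ^ t ∈ (Finset.univ : Finset (Fin k)).offDiag.image (fun ij => η ^ E ij) := by
    rw [himg]
    simp only [Finset.mem_filter, Finset.mem_univ, true_and]
    rw [← pow_mul, show t * (2 * M) = p - 1 by omega]
    exact ZMod.units_pow_card_sub_one_eq_one p c
  obtain ⟨ij, hij, e⟩ := Finset.mem_image.1 hc
  simp only [Finset.mem_offDiag, Finset.mem_univ, true_and] at hij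
  refine ⟨ij, ⟨hij, ?_⟩, ?_⟩
  · rw [hE ij hij, e, Units.val_pow_eq_pow_val]
  · rintro ij' ⟨hij', e'⟩
    refine hinj (by simpa using hij') (by simpa using hij) ?_
    rw [hE ij' hij'] at e'
    refine Eq.trans (Units.ext ?_) e.symm
    rw [e', Units.val_pow_eq_pow_val]

/-! ### Invariant colouring of vectors -/

/-- A `G`-invariant colouring of the nonzero vectors of `G → F` by `t`-th powers of units, on which
scalars `c` act as multiplication by `c ^ t`. It is defined by choosing a representative in each
orbit of `Fˣ × G`; this is consistent since a scalar by which some `g : G` acts on a nonzero vector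
has order dividing `|G|`, hence `t`. -/
lemma exists_phi {F G : Type} [Field F] [Group G] [Fintype G] (t : ℕ) (ht : Fintype.card G ∣ t) :
    ∃ φ : (G → F) → Fˣ, (∀ w, ∃ c, φ w = c ^ t) ∧
      ∀ (c : Fˣ) (g : G) (w : G → F), w ≠ 0 → φ (fun x => c * w (x * g)) = c ^ t * φ w := by
  classical
  let st : Setoid (G → F) :=
    { r := fun w w' => ∃ (c : Fˣ) (g : G), w' = fun x => c * w (x * g)
      iseqv :=
        { refl := fun w => ⟨1, 1, by simp⟩
          symm := by
            rintro w _ ⟨c, g, rfl⟩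
            exact ⟨c⁻¹, g⁻¹, by simp⟩
          trans := by
            rintro w _ _ ⟨c, g, rfl⟩ ⟨c', g', rfl⟩
            exact ⟨c' * c, g' * g, by simp [mul_assoc]⟩ } }
  let r : (G → F) → (G → F) := fun w => (Quotient.mk st w).out
  have hr : ∀ w, ∃ (c : Fˣ) (g : G), w = fun x => c * r w (x * g) := fun w =>
    Quotient.exact (Quotient.out_eq (Quotient.mk st w))
  choose γ δ hγ using hr
  -- If `g` scales `u ≠ 0` by `d`, then `d ^ |G| = 1`, hence `d ^ t = 1`.
  have hfix : ∀ (u : G → F) (d : Fˣ) (g : G), u ≠ 0 → (∀ x, u (x * g) = d * u x) → d ^ t = 1 := by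
    intro u d g hu h
    have hn : ∀ (n : ℕ) x, u (x * g ^ n) = (d : F) ^ n * u x := by
      intro n
      induction n with
      | zero => simp
      | succ n ih => intro x; rw [pow_succ g, ← mul_assoc, h, ih]; ring
    obtain ⟨x, hx⟩ := Function.ne_iff.1 hu
    have h1 := hn (Fintype.card G) x
    rw [pow_card_eq_one, mul_one] at h1
    have h2 : (d : F) ^ Fintype.card G = 1 := by
      have : ((d : F) ^ Fintype.card G - 1) * u x = 0 := by rw [sub_mul, ← h1]; ring
      rcases mul_eq_zero.1 this with h | h
      · exact sub_eq_zero.1 h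
      · exact absurd h hx
    obtain ⟨s, rfl⟩ := ht
    rw [pow_mul, show d ^ Fintype.card G = 1 from Units.ext (by simpa using h2), one_pow]
  refine ⟨fun w => γ w ^ t, fun w => ⟨γ w, rfl⟩, fun c g w hw => ?_⟩
  set w' : G → F := fun x => c * w (x * g) with hw'
  have hrr : r w' = r w := by
    have : Quotient.mk st w' = Quotient.mk st w := (Quotient.sound (s := st) (a := w) (b := w') ⟨c, g, rfl⟩).symm
    simp only [r, this]
  have h1 := hγ w
  have h2 := hγ w'
  rw [hrr] at h2
  have hu : r w ≠ 0 := by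
    intro h0
    apply hw
    rw [h1, h0]; ext x; simp
  have h3 : ∀ x, (γ w' : F) * r w (x * δ w') = c * (γ w * r w (x * g * δ w)) := by
    intro x
    rw [← congrFun h1 (x * g), ← congrFun h2 x]
  -- Comparing the two expressions of `w'` through `r w` shows that `g` and the chosen translations
  -- scale `r w` by the quotient of the two coefficients.
  have h4 := hfix (r w) ((c * γ w)⁻¹ * γ w') ((δ w')⁻¹ * (g * δ w)) hu (by
    intro x
    have := h3 (x * (δ w')⁻¹)
    rw [inv_mul_cancel_right] at this
    rw [show x * ((δ w')⁻¹ * (g * δ w)) = x * (δ w')⁻¹ * g * δ w by group, Units.val_mul,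
      mul_assoc (((c * γ w)⁻¹ : Fˣ) : F), this, ← mul_assoc (c : F), ← Units.val_mul, Units.inv_mul_cancel_left])
  show γ w' ^ t = c ^ t * γ w ^ t
  rw [mul_pow, inv_pow, inv_mul_eq_one, mul_pow] at h4
  exact h4.symm

/-! ### The design and its group -/

/-- A design with a `1`-blocked group action may be carried over from any finite point type to
`Fin v`. -/
lemma transport {α G : Type} [Fintype α] [DecidableEq α] [Group G] {k : ℕ} (D : Design α k)
    (f : G →* Equiv.Perm α) (hf : Function.Injective f) (ha : ∀ g, IsAuto D (f g))
    (hb : ∀ g : G, ∀ B ∈ D.blocks, B.image (f g) = B → ∀ x ∈ B, (f g) x = x) :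
    ∃ (D : Design (Fin (Fintype.card α)) k) (f : G →* Equiv.Perm (Fin (Fintype.card α))),
        Function.Injective f ∧ (∀ g : G, IsAuto D (f g)) ∧
        (∀ g : G, ∀ B ∈ D.blocks, B.image (f g) = B → ∀ x ∈ B, (f g) x = x) := by
  set e := Fintype.equivFin α
  have hmem : ∀ (B : Finset (Fin (Fintype.card α))) x, x ∈ B.image e.symm ↔ e x ∈ B := by
    intro B x
    simp [Equiv.symm_apply_eq]
  have himg : ∀ (B : Finset (Fin (Fintype.card α))) (g : G),
      (B.image (e.permCongrHom (f g))).image e.symm = (B.image e.symm).image (f g) := by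
    intro B g
    simp only [Finset.image_image]
    congr 1
    ext x
    simp
  refine ⟨⟨Finset.univ.filter fun B => B.image e.symm ∈ D.blocks, ?_, ?_⟩,
    (e.permCongrHom : Equiv.Perm α →* _).comp f, ?_, ?_, ?_⟩
  · intro B hB
    rw [← D.blockSize _ (Finset.mem_filter.1 hB).2, Finset.card_image_of_injective _ e.symm.injective]
  · intro x y hxy
    obtain ⟨B, ⟨hB, hx, hy⟩, hu⟩ := D.pairCover (e.symm x) (e.symm y) (by simpa using hxy)
    have hBB : (B.image e).image e.symm = B := by
      rw [Finset.image_image]; simp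
    refine ⟨B.image e, ⟨by simpa [hBB] using hB, ?_, ?_⟩, ?_⟩
    · exact Finset.mem_image.2 ⟨_, hx, by simp⟩
    · exact Finset.mem_image.2 ⟨_, hy, by simp⟩
    · rintro B' ⟨h1, h2, h3⟩
      rw [← hu (B'.image e.symm) ⟨(Finset.mem_filter.1 h1).2, by simpa using h2, by simpa using h3⟩,
        Finset.image_image]
      simp
  · exact e.permCongrHom.injective.comp hf
  · intro g B
    simp only [Finset.mem_filter, Finset.mem_univ, true_and, MonoidHom.comp_apply]
    rw [ha g]
    exact Eq.to_iff (congrArg (· ∈ D.blocks) (himg B g).symm)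
  · intro g B hB hgB x hx
    have h1 := hb g (B.image e.symm) (Finset.mem_filter.1 hB).2
      ((himg B g).symm.trans (congrArg (Finset.image e.symm) hgB)) (e.symm x)
      (Finset.mem_image_of_mem _ hx)
    show e (f g (e.symm x)) = x
    rw [h1, Equiv.apply_symm_apply]

/-- The permutation action of `G` on `G → F`. Translating the argument on the right makes this a left
action. -/
def coordAction (F G : Type) [Group G] : G →* Equiv.Perm (G → F) where
  toFun g := ⟨fun w x => w (x * g), fun w x => w (x * g⁻¹), fun w => by simp, fun w => by simp⟩
  map_one' := by ext w x; simp
  map_mul' g h := by ext w x; simp [mul_assoc]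

lemma coordAction_apply {F G : Type} [Group G] (g : G) (w : G → F) (x : G) :
    coordAction F G g w x = w (x * g) := rfl

/-- The development of a base block along the nonzero vectors of colour `1` is a design on `G → F` on
which `G` acts as a `1`-blocked group. -/
lemma main_design {F G : Type} [Field F] [Fintype F] [DecidableEq F] [Group G] [Fintype G]
    [DecidableEq G] {k : ℕ} (hk : 2 ≤ k) (t : ℕ) (ht0 : 0 < t) (ht : Fintype.card G ∣ t)
    (b : Fin k → F)
    (hb : ∀ c : Fˣ, ∃! ij : Fin k × Fin k, ij.1 ≠ ij.2 ∧ (b ij.2 - b ij.1) ^ t = (c : F) ^ t) :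
    ∃ (D : Design (G → F) k) (f : G →* Equiv.Perm (G → F)),
        Function.Injective f ∧ (∀ g : G, IsAuto D (f g)) ∧
        (∀ g : G, ∀ B ∈ D.blocks, B.image (f g) = B → ∀ x ∈ B, (f g) x = x) := by
  classical
  obtain ⟨φ, hφt, hφ⟩ := exists_phi (F := F) (G := G) t ht
  have hφc : ∀ (c : Fˣ) (w : G → F), w ≠ 0 → φ ((c : F) • w) = c ^ t * φ w := by
    intro c w hw
    have := hφ c 1 w hw
    simp only [mul_one] at this
    exact this
  have hφg : ∀ (g : G) (w : G → F), w ≠ 0 → φ (coordAction F G g w) = φ w := by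
    intro g w hw
    have := hφ 1 g w hw
    simp only [Units.val_one, one_mul, one_pow] at this
    exact this
  have hbinj : Function.Injective b := by
    obtain ⟨⟨i0, j0⟩, ⟨-, h0⟩, -⟩ := hb 1
    have hne : b i0 ≠ b j0 := by
      intro h
      simp only [h, sub_self, zero_pow ht0.ne', Units.val_one, one_pow] at h0
      exact zero_ne_one h0
    intro i j hij
    -- When `b i = b j`, the pairs `(i, l)` and `(j, l)` have the same difference for every `l`.
    obtain ⟨l, hl⟩ : ∃ l, b l ≠ b i := by
      by_cases h : b i0 = b i
      · exact ⟨j0, fun h' => hne (h.trans h'.symm)⟩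
      · exact ⟨i0, h⟩
    obtain ⟨p, -, hu⟩ := hb (Units.mk0 (b l - b i) (sub_ne_zero.2 hl))
    have h1 := hu (i, l) ⟨fun h => hl (congrArg b h).symm, rfl⟩
    have h2 := hu (j, l) ⟨fun h => hl ((congrArg b h).symm.trans hij.symm), by simp [hij]⟩
    exact congrArg Prod.fst (h1.trans h2.symm)
  let blk : (G → F) → (G → F) → Finset (G → F) := fun x e =>
    Finset.univ.image fun i => x + b i • e
  -- A pair of distinct points determines the parameters `x` and `e` of its block.
  have key : ∀ y z : G → F, y ≠ z → ∃ i j x e, e ≠ 0 ∧ φ e = 1 ∧ y = x + b i • e ∧ z = x + b j • e ∧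
      ∀ i' j' x' e', e' ≠ 0 → φ e' = 1 → y = x' + b i' • e' → z = x' + b j' • e' →
        x' = x ∧ e' = e := by
    intro y z hyz
    have hw : z - y ≠ 0 := sub_ne_zero.2 hyz.symm
    obtain ⟨c, hc⟩ := hφt (z - y)
    obtain ⟨⟨i, j⟩, ⟨hij, e1⟩, hu⟩ := hb c
    simp only at hij e1
    have hd : b j - b i ≠ 0 := sub_ne_zero.2 fun h => hij (hbinj h).symm
    set d : Fˣ := Units.mk0 _ hd with hdd
    have hdt : d ^ t = c ^ t := Units.ext (by simpa [hdd] using e1)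
    set e : G → F := ((d⁻¹ : Fˣ) : F) • (z - y) with he
    have hde : (b j - b i) • e = z - y := by
      rw [he, smul_smul, show b j - b i = (d : F) from rfl, Units.mul_inv, one_smul]
    have he0 : e ≠ 0 := by
      intro h; rw [h, smul_zero] at hde; exact hw hde.symm
    refine ⟨i, j, y - b i • e, e, he0, ?_, by simp, ?_, ?_⟩
    · rw [he, hφc _ _ hw, hc, inv_pow, hdt, inv_mul_cancel]
    · rw [sub_smul] at hde
      rw [sub_add, ← neg_sub (b j • e), hde]; abel
    · intro i' j' x' e' he' hφe' hy hz
      have h1 : (b j' - b i') • e' = z - y := by rw [hy, hz, sub_smul]; abel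
      have hd' : b j' - b i' ≠ 0 := by
        intro h; rw [h, zero_smul] at h1; exact hw h1.symm
      set d' : Fˣ := Units.mk0 _ hd' with hdd'
      have h2 : d' ^ t = c ^ t := by
        rw [← hc, ← h1, show b j' - b i' = (d' : F) from rfl, hφc _ _ he', hφe', mul_one]
      have h3 : ((i', j') : Fin k × Fin k) = (i, j) := by
        refine hu (i', j') ⟨fun h => hd' ?_, ?_⟩
        · simp only at h; rw [h, sub_self]
        · simpa [hdd'] using congrArg Units.val h2
      obtain ⟨rfl, rfl⟩ := Prod.mk.inj h3
      have h4 : e' = e := smul_right_injective _ hd' (h1.trans hde.symm)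
      subst h4
      exact ⟨by rw [hy]; abel, rfl⟩
  have hmem : ∀ x e y, y ∈ blk x e ↔ ∃ i, y = x + b i • e := by
    intro x e y; simp [blk, eq_comm]
  have hbinj' : ∀ x e : G → F, e ≠ 0 → Function.Injective fun i : Fin k => x + b i • e := by
    intro x e he i j h
    exact hbinj (smul_left_injective F he (add_left_cancel h))
  have hblkinj : ∀ x e x' e', e ≠ 0 → φ e = 1 → e' ≠ 0 → φ e' = 1 → blk x e = blk x' e' →
      x = x' ∧ e = e' := by
    intro x e x' e' he hφe he' hφe' h
    let i0 : Fin k := ⟨0, by omega⟩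
    let i1 : Fin k := ⟨1, by omega⟩
    have hne : x + b i0 • e ≠ x + b i1 • e := fun h => by
      have := hbinj' x e he h
      simp [i0, i1] at this
    obtain ⟨i, j, X, E, -, -, -, -, hu⟩ := key _ _ hne
    obtain ⟨i', hi'⟩ := (hmem x' e' _).1 (h ▸ (hmem x e _).2 ⟨i0, rfl⟩)
    obtain ⟨j', hj'⟩ := (hmem x' e' _).1 (h ▸ (hmem x e _).2 ⟨i1, rfl⟩)
    obtain ⟨h1, h2⟩ := hu i0 i1 x e he hφe rfl rfl
    obtain ⟨h3, h4⟩ := hu i' j' x' e' he' hφe' hi' hj'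
    exact ⟨h1.trans h3.symm, h2.trans h4.symm⟩
  have himg : ∀ g x e, (blk x e).image (coordAction F G g)
      = blk (coordAction F G g x) (coordAction F G g e) := by
    intro g x e
    simp only [blk, Finset.image_image]
    congr 1
  have hg0 : ∀ g e, e ≠ 0 → coordAction F G g e ≠ 0 := by
    intro g e he h
    exact he ((coordAction F G g).injective (h.trans (by ext x; simp [coordAction_apply])))
  let D : Design (G → F) k :=
    { blocks := Finset.univ.filter fun B => ∃ x e, e ≠ 0 ∧ φ e = 1 ∧ B = blk x e
      blockSize := by
        intro B hB
        obtain ⟨x, e, he, -, rfl⟩ := (Finset.mem_filter.1 hB).2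
        rw [Finset.card_image_of_injective _ (hbinj' x e he), Finset.card_univ, Fintype.card_fin]
      pairCover := by
        intro y z hyz
        obtain ⟨i, j, x, e, he, hφe, hy, hz, hu⟩ := key y z hyz
        refine ⟨blk x e, ⟨by simpa using ⟨x, e, he, hφe, rfl⟩, (hmem _ _ _).2 ⟨i, hy⟩,
          (hmem _ _ _).2 ⟨j, hz⟩⟩, ?_⟩
        rintro B ⟨hB, hyB, hzB⟩
        obtain ⟨x', e', he', hφe', rfl⟩ := (Finset.mem_filter.1 hB).2
        obtain ⟨i', hi'⟩ := (hmem _ _ _).1 hyB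
        obtain ⟨j', hj'⟩ := (hmem _ _ _).1 hzB
        obtain ⟨rfl, rfl⟩ := hu i' j' x' e' he' hφe' hi' hj'
        rfl }
  have hDmem : ∀ B, B ∈ D.blocks ↔ ∃ x e, e ≠ 0 ∧ φ e = 1 ∧ B = blk x e := by
    intro B; simp [D]
  have hfwd : ∀ g B, B ∈ D.blocks → B.image (coordAction F G g) ∈ D.blocks := by
    intro g B hB
    obtain ⟨x, e, he, hφe, rfl⟩ := (hDmem _).1 hB
    exact (hDmem _).2 ⟨_, _, hg0 g e he, (hφg g e he).trans hφe, himg g x e⟩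
  refine ⟨D, coordAction F G, ?_, ?_, ?_⟩
  · intro g h hgh
    have h1 := congrFun (Equiv.congr_fun hgh (Pi.single h 1)) 1
    simp only [coordAction_apply, one_mul, Pi.single_eq_same] at h1
    by_contra hne
    rw [Pi.single_eq_of_ne hne] at h1
    exact zero_ne_one h1
  · intro g B
    refine ⟨hfwd g B, fun h => ?_⟩
    have := hfwd g⁻¹ _ h
    rw [Finset.image_image, map_inv] at this
    simpa using this
  · intro g B hB hgB y hy
    obtain ⟨x, e, he, hφe, rfl⟩ := (hDmem _).1 hB
    rw [himg] at hgB
    obtain ⟨h1, h2⟩ := hblkinj _ _ _ _ (hg0 g e he) ((hφg g e he).trans hφe) he hφe hgB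
    obtain ⟨i, rfl⟩ := (hmem _ _ _).1 hy
    calc coordAction F G g (x + b i • e)
        = coordAction F G g x + b i • coordAction F G g e := rfl
      _ = _ := by rw [h1, h2]

/-- Let `k ≥ 3` and let `G` be a finite group of odd order. Then there are
infinitely many `v` for which there is a `2`-`(v,k,1)` design whose
automorphism group contains a `1`-blocked subgroup isomorphic to `G`
(1-blocked: the setwise stabilizer of any block acts as the identity on the
block). -/
theorem statement5 (k : ℕ) (hk : 3 ≤ k) (G : Type) [Group G] [Fintype G]
    (hG : Odd (Fintype.card G)) :
    ∀ N : ℕ, ∃ v : ℕ, N < v ∧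
      ∃ (D : Design (Fin v) k) (f : G →* Equiv.Perm (Fin v)),
        Function.Injective f ∧ (∀ g : G, IsAuto D (f g)) ∧
        (∀ g : G, ∀ B ∈ D.blocks, B.image (f g) = B → ∀ x ∈ B, (f g) x = x) := by
  classical
  intro N
  obtain ⟨p, hpN, hp, t, htodd, hmt, b, hb⟩ := exists_base k (by omega) _ hG N
  obtain ⟨D, f, hf, ha, hD⟩ := main_design (G := G) (by omega) t htodd.pos hmt b hb
  refine ⟨Fintype.card (G → ZMod p), ?_, transport D f hf ha hD⟩
  rw [Fintype.card_fun, ZMod.card]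
  exact hpN.trans_le (Nat.le_self_pow Fintype.card_ne_zero p)
end

section
/- Let k ≥ 3 be an integer and let h be a multiple of 4 such that gcd(k, h) = 1. Then there are infinitely many primes p > h for which there exists an integer n satisfying: (i) p = 1 + (k − 1)n; (ii) n(n − 1) ≡ 0 (mod k); (iii) n(n − 1) ≡ 0 (mod 4k) if k ≡ 3 (mod 4); and (iv) gcd(p − 1, h) = gcd(k − 1, h). -/
/-!
The congruences `n ≡ 0 (mod k)` and `n ≡ 1 (mod h)` are compatible, and they imply all conditions
on `n`: the first gives `k ∣ n (n - 1)`; the second gives `4 ∣ n - 1` (as `4 ∣ h`) and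
`(k - 1) n ≡ k - 1 (mod h)`, hence the gcd identity. The resulting numbers `1 + (k - 1) n` form one
residue class modulo `(k - 1) k h`. It is `1` modulo `k - 1` and modulo `k`, and `k` modulo `h`, so
it is invertible, and Dirichlet's theorem on primes in arithmetic progressions applies.
-/

/-- Let `k ≥ 3` and let `h` be a positive multiple of `4` with `gcd(k,h) = 1`.
Then there are infinitely many primes `p > h` for which there exists a positive
integer `n` with: `p = 1 + (k-1)n`; `n(n-1) ≡ 0 (mod k)`;
`n(n-1) ≡ 0 (mod 4k)` if `k ≡ 3 (mod 4)`; and `gcd(p-1,h) = gcd(k-1,h)`. -/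
theorem statement6 (k h : ℕ) (hk : 3 ≤ k) (hh : 0 < h) (h4 : 4 ∣ h)
    (hcop : Nat.Coprime k h) :
    ∀ N : ℕ, ∃ p : ℕ, N < p ∧ p.Prime ∧ h < p ∧
      ∃ n : ℕ, 0 < n ∧ p = 1 + (k - 1) * n ∧ k ∣ n * (n - 1) ∧
        (k % 4 = 3 → 4 * k ∣ n * (n - 1)) ∧
        Nat.gcd (p - 1) h = Nat.gcd (k - 1) h := by
  intro N
  obtain ⟨j, rfl⟩ : ∃ j, k = j + 1 := ⟨k - 1, by omega⟩
  simp only [Nat.add_sub_cancel]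
  obtain ⟨n₀, hn0, hn1⟩ := Nat.chineseRemainder hcop 0 1
  have hcoph : Nat.Coprime (1 + j * n₀) h := by
    have h1 : 1 + j * n₀ ≡ j + 1 [MOD h] := by
      have := (hn1.mul_left j).add_left 1
      rwa [mul_one, add_comm 1 j] at this
    exact h1.gcd_eq.trans hcop
  have hcopk : Nat.Coprime (1 + j * n₀) (j + 1) := by
    have h1 : 1 + j * n₀ ≡ 1 [MOD j + 1] := (hn0.mul_left j).add_left 1
    exact h1.gcd_eq.trans (Nat.gcd_one_left _)
  have hcopj : Nat.Coprime (1 + j * n₀) j := by simp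
  have hq : j * (j + 1) * h ≠ 0 := by
    have : j ≠ 0 := by omega
    positivity
  obtain ⟨p, hpgt, hp, hmod⟩ := Nat.forall_exists_prime_gt_and_modEq (N + h + (1 + j * n₀)) hq
    ((hcopj.mul_right hcopk).mul_right hcoph)
  obtain ⟨m, hm⟩ := (Nat.modEq_iff_dvd' (by omega)).1 hmod.symm
  set n := n₀ + (j + 1) * h * m with hn
  have hpn : p = 1 + j * n := by
    have h1 : p = j * (j + 1) * h * m + (1 + j * n₀) := by omega
    rw [h1, hn]
    ring
  have hkn : j + 1 ∣ n :=
    dvd_add ((Nat.modEq_zero_iff_dvd).1 hn0) (Dvd.intro _ (mul_assoc _ _ _).symm)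
  have hnh : n ≡ 1 [MOD h] := by
    have h1 : (j + 1) * h * m ≡ 0 [MOD h] := (Nat.modEq_zero_iff_dvd).2 ⟨(j + 1) * m, by ring⟩
    exact hn1.add h1
  have hnpos : 0 < n := by
    rcases Nat.eq_zero_or_pos n with h0 | h0
    · rw [h0, mul_zero] at hpn
      omega
    · exact h0
  refine ⟨p, by omega, hp, by omega, n, hnpos, hpn, hkn.mul_right _, fun _ => ?_, ?_⟩
  · have h4n : 4 ∣ n - 1 := h4.trans ((Nat.modEq_iff_dvd' hnpos).1 hnh.symm)
    rw [mul_comm 4]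
    exact mul_dvd_mul hkn h4n
  · rw [hpn, Nat.add_sub_cancel_left]
    have := hnh.mul_left j
    rw [mul_one] at this
    exact this.gcd_eq
end

section
/- Let k ≥ 3 and let w, x, y be positive integers with x < y. If there exist a 2-(w,k,1)-design, a transversal design TD(k, y − x), and a 2-(y,k,1)-design with an x-point subdesign, then there exists a 2-(w(y − x) + x, k, 1)-design. -/
/-- A transversal design `TD(k,n)` on a point type `α` (with `k*n` points):
`n^2` blocks of size `k`, a partition of the points into `k` groups of size `n`,
each block meets each group in exactly one point, and any two points in
different groups lie together in exactly one block. -/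
structure TransversalDesign (α : Type) [DecidableEq α] (k n : ℕ) where
  groups : Finset (Finset α)
  blocks : Finset (Finset α)
  groups_card : groups.card = k
  group_size : ∀ G ∈ groups, G.card = n
  groups_partition : ∀ x : α, ∃! G, G ∈ groups ∧ x ∈ G
  blocks_card : blocks.card = n ^ 2
  block_size : ∀ B ∈ blocks, B.card = k
  block_meets : ∀ B ∈ blocks, ∀ G ∈ groups, (B ∩ G).card = 1
  pair_cover : ∀ x y : α, (∀ G ∈ groups, ¬(x ∈ G ∧ y ∈ G)) →
    ∃! B, B ∈ blocks ∧ x ∈ B ∧ y ∈ B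

/-- `X` is the point set of a subdesign of `Y`: every block of `Y` containing at
least two points of `X` is contained in `X`. -/
def IsSubdesign {α : Type} [DecidableEq α] {k : ℕ} (Y : Design α k)
    (X : Finset α) : Prop :=
  ∀ B ∈ Y.blocks, 2 ≤ (B ∩ X).card → B ⊆ X

/-- A system of blocks on an arbitrary finite point type can be transported to `Fin N`. -/
lemma design_of_pred {P : Type} [Fintype P] [DecidableEq P] {N k : ℕ} (hN : Fintype.card P = N)
    (Q : Finset P → Prop) (hcard : ∀ B, Q B → B.card = k)
    (hpair : ∀ u v : P, u ≠ v → ∃! B, Q B ∧ u ∈ B ∧ v ∈ B) :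
    Nonempty (Design (Fin N) k) := by
  classical
  let e : P ≃ Fin N := Fintype.equivFinOfCardEq hN
  refine ⟨⟨Finset.univ.filter fun B => Q (B.map e.symm.toEmbedding), ?_, ?_⟩⟩
  · intro B hB
    simpa using hcard _ (Finset.mem_filter.1 hB).2
  · intro u v huv
    obtain ⟨B, ⟨hB, hu, hv⟩, huniq⟩ := hpair (e.symm u) (e.symm v) (by simpa using huv)
    have hBB : (B.map e.toEmbedding).map e.symm.toEmbedding = B := by
      ext z; simp
    refine ⟨B.map e.toEmbedding, ⟨?_, ?_, ?_⟩, ?_⟩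
    · rw [Finset.mem_filter, hBB]
      exact ⟨Finset.mem_univ _, hB⟩
    · exact Finset.mem_map.2 ⟨_, hu, by simp⟩
    · exact Finset.mem_map.2 ⟨_, hv, by simp⟩
    · rintro C ⟨hC, hCu, hCv⟩
      have := huniq (C.map e.symm.toEmbedding)
        ⟨(Finset.mem_filter.1 hC).2, Finset.mem_map_of_mem _ hCu, Finset.mem_map_of_mem _ hCv⟩
      rw [← this]
      ext z; simp

/-- A transversal design as an orthogonal array: after identifying each group with `M`, every block
becomes the graph of a function from the `k` groups to `M`. -/
lemma exists_orthogonal_array {α M : Type} [DecidableEq α] [Fintype M] {k n : ℕ}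
    (hM : Fintype.card M = n) (T : TransversalDesign α k n) :
    ∃ F : Set (Fin k → M), ∀ i j, i ≠ j → ∀ a b, ∃! f, f ∈ F ∧ f i = a ∧ f j = b := by
  classical
  let eG : T.groups ≃ Fin k := T.groups.equivFinOfCardEq T.groups_card
  have hg : ∀ i : Fin k, Nonempty (M ≃ ((eG.symm i).1 : Finset α)) := fun i =>
    ⟨Fintype.equivOfCardEq (by simp [hM, T.group_size _ (eG.symm i).2])⟩
  let g : ∀ i : Fin k, M ≃ ((eG.symm i).1 : Finset α) := fun i => (hg i).some
  have hgroup : ∀ i j a b, (∃ G ∈ T.groups, (g i a : α) ∈ G ∧ (g j b : α) ∈ G) → i = j := by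
    rintro i j a b ⟨G, hG, h1, h2⟩
    have h3 := (T.groups_partition (g i a)).unique ⟨hG, h1⟩ ⟨(eG.symm i).2, (g i a).2⟩
    have h4 := (T.groups_partition (g j b)).unique ⟨hG, h2⟩ ⟨(eG.symm j).2, (g j b).2⟩
    exact eG.symm.injective (Subtype.ext (h3.symm.trans h4))
  have hmeet : ∀ B ∈ T.blocks, ∀ i, ∃! m, (g i m : α) ∈ B := by
    intro B hB i
    obtain ⟨z, hz⟩ := Finset.card_eq_one.1 (T.block_meets B hB _ (eG.symm i).2)
    have hz' : z ∈ B ∩ (eG.symm i).1 := by simp [hz]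
    rw [Finset.mem_inter] at hz'
    refine ⟨(g i).symm ⟨z, hz'.2⟩, by simpa using hz'.1, ?_⟩
    intro m hm
    have h : (g i m : α) ∈ B ∩ (eG.symm i).1 := Finset.mem_inter.2 ⟨hm, (g i m).2⟩
    rw [hz, Finset.mem_singleton] at h
    rw [Equiv.eq_symm_apply]
    exact Subtype.ext h
  refine ⟨{f | ∃ B ∈ T.blocks, ∀ i, (g i (f i) : α) ∈ B}, ?_⟩
  intro i j hij a b
  obtain ⟨B, ⟨hB, ha, hb⟩, huniq⟩ := T.pair_cover (g i a) (g j b)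
    (fun G hG h => hij (hgroup i j a b ⟨G, hG, h⟩))
  choose f hf hf' using hmeet B hB
  refine ⟨f, ⟨⟨B, hB, hf⟩, (hf' i a ha).symm, (hf' j b hb).symm⟩, ?_⟩
  rintro f₂ ⟨⟨B₂, hB₂, h₂⟩, rfl, rfl⟩
  obtain rfl := huniq B₂ ⟨hB₂, h₂ i, h₂ j⟩
  funext l
  exact hf' l _ (h₂ l)

/-- The points of the new design: a copy of the complement of `X` for each element of `Fin w`,
and one copy of `X`. -/
abbrev Pt (w : ℕ) {y : ℕ} (X : Finset (Fin y)) : Type :=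
  (Fin w × {a : Fin y // a ∉ X}) ⊕ {a : Fin y // a ∈ X}

/-- The embedding of the points of `Y` which fixes `X` and sends the complement of `X` to its
`p`-th copy. -/
def fiberEmb {w y : ℕ} (X : Finset (Fin y)) (p : Fin w) : Fin y ↪ Pt w X where
  toFun a := if h : a ∈ X then Sum.inr ⟨a, h⟩ else Sum.inl (p, ⟨a, h⟩)
  inj' a b hab := by
    by_cases ha : a ∈ X <;> by_cases hb : b ∈ X <;> simp [ha, hb] at hab ⊢ <;> exact hab

section
variable {w y : ℕ} {X : Finset (Fin y)}

lemma fiberEmb_of_mem (p : Fin w) {a : Fin y} (h : a ∈ X) :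
    fiberEmb X p a = Sum.inr ⟨a, h⟩ := by
  exact dif_pos h

lemma fiberEmb_of_notMem (p : Fin w) {a : Fin y} (h : a ∉ X) :
    fiberEmb X p a = Sum.inl (p, ⟨a, h⟩) := by
  exact dif_neg h

lemma inr_mem_map_fiberEmb (p : Fin w) (C : Finset (Fin y)) (a : {a : Fin y // a ∈ X}) :
    (Sum.inr a : Pt w X) ∈ C.map (fiberEmb X p) ↔ a.1 ∈ C := by
  rw [← fiberEmb_of_mem p a.2, Finset.mem_map' (fiberEmb X p)]

lemma inl_mem_map_fiberEmb (p q : Fin w) (C : Finset (Fin y)) (a : {a : Fin y // a ∉ X}) :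
    (Sum.inl (q, a) : Pt w X) ∈ C.map (fiberEmb X p) ↔ q = p ∧ a.1 ∈ C := by
  by_cases hqp : q = p
  · subst hqp
    rw [← fiberEmb_of_notMem q a.2, Finset.mem_map' (fiberEmb X q)]
    simp
  · simp only [hqp, false_and, iff_false, Finset.mem_map, not_exists, not_and]
    intro c _ hc
    by_cases h : c ∈ X
    · simp [fiberEmb_of_mem p h] at hc
    · rw [fiberEmb_of_notMem p h] at hc
      simp only [Sum.inl.injEq, Prod.mk.injEq] at hc
      exact hqp hc.1.symm

/-- All the copies of `Y` agree on the subsets of `X`. -/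
lemma map_fiberEmb_of_subset (p q : Fin w) {C : Finset (Fin y)} (hC : C ⊆ X) :
    C.map (fiberEmb X p) = C.map (fiberEmb X q) := by
  ext (⟨r, a⟩ | a)
  · have ha : a.1 ∉ C := fun h => a.2 (hC h)
    simp only [inl_mem_map_fiberEmb, ha, and_false]
  · simp only [inr_mem_map_fiberEmb]

/-- The set `{(p, f (c p)) : p ∈ B}`, where `c` labels the points of `B`. -/
def graphBlock {k : ℕ} (X : Finset (Fin y)) (B : Finset (Fin w)) (c : Fin w → Fin k)
    (f : Fin k → {a : Fin y // a ∉ X}) : Finset (Pt w X) :=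
  B.map ⟨fun p => Sum.inl (p, f (c p)), fun p q h => by
    simp only [Sum.inl.injEq, Prod.mk.injEq] at h
    exact h.1⟩

lemma inl_mem_graphBlock {k : ℕ} (B : Finset (Fin w)) (c : Fin w → Fin k)
    (f : Fin k → {a : Fin y // a ∉ X}) (p : Fin w) (a : {a : Fin y // a ∉ X}) :
    (Sum.inl (p, a) : Pt w X) ∈ graphBlock X B c f ↔ p ∈ B ∧ f (c p) = a := by
  rw [graphBlock, Finset.mem_map]
  constructor
  · rintro ⟨q, hq, h⟩
    obtain ⟨rfl, hfa⟩ := Prod.mk.inj (Sum.inl.inj h)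
    exact ⟨hq, hfa⟩
  · rintro ⟨hp, rfl⟩
    exact ⟨p, hp, rfl⟩

lemma inr_notMem_graphBlock {k : ℕ} (B : Finset (Fin w)) (c : Fin w → Fin k)
    (f : Fin k → {a : Fin y // a ∉ X}) (a : {a : Fin y // a ∈ X}) :
    (Sum.inr a : Pt w X) ∉ graphBlock X B c f := by
  simp [graphBlock]

/-- The blocks of the new design: those of the copies of `Y`, and the transversal ones. Here `c B`
labels the points of the block `B` of `W`, and `F` is the orthogonal array. -/
def IsBlock {k : ℕ} (W : Design (Fin w) k) (Y : Design (Fin y) k) (X : Finset (Fin y))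
    (c : Finset (Fin w) → Fin w → Fin k) (F : Set (Fin k → {a : Fin y // a ∉ X}))
    (D : Finset (Pt w X)) : Prop :=
  (∃ p : Fin w, ∃ C ∈ Y.blocks, D = C.map (fiberEmb X p)) ∨
    ∃ B ∈ W.blocks, ∃ f ∈ F, D = graphBlock X B (c B) f

variable {k : ℕ} {W : Design (Fin w) k} {Y : Design (Fin y) k}
  {c : Finset (Fin w) → Fin w → Fin k} {F : Set (Fin k → {a : Fin y // a ∉ X})}

/-- A pair of points of the `p`-th copy of `Y`, not both in `X`, lies in a unique block. -/
lemma exists_unique_block_fiber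
    (p : Fin w) (a : {a : Fin y // a ∉ X}) (b : Fin y) (hab : a.1 ≠ b) :
    ∃! D, IsBlock W Y X c F D ∧ Sum.inl (p, a) ∈ D ∧ fiberEmb X p b ∈ D := by
  obtain ⟨C, ⟨hC, haC, hbC⟩, huniq⟩ := Y.pairCover a.1 b hab
  refine ⟨C.map (fiberEmb X p), ⟨Or.inl ⟨p, C, hC, rfl⟩, ?_, ?_⟩, ?_⟩
  · exact (inl_mem_map_fiberEmb _ _ _ _).2 ⟨rfl, haC⟩
  · exact Finset.mem_map_of_mem _ hbC
  · rintro D ⟨⟨q, C', hC', rfl⟩ | ⟨B, hB, f, hf, rfl⟩, h1, h2⟩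
    · obtain ⟨rfl, haC'⟩ := (inl_mem_map_fiberEmb _ _ _ _).1 h1
      rw [Finset.mem_map' (fiberEmb X p)] at h2
      rw [huniq C' ⟨hC', haC', h2⟩]
    · exfalso
      by_cases hb : b ∈ X
      · rw [fiberEmb_of_mem p hb] at h2
        exact inr_notMem_graphBlock _ _ _ _ h2
      · rw [fiberEmb_of_notMem p hb] at h2
        have e1 := ((inl_mem_graphBlock _ _ _ _ _).1 h1).2
        have e2 := ((inl_mem_graphBlock _ _ _ _ _).1 h2).2
        exact hab (congrArg Subtype.val (e1.symm.trans e2))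

lemma exists_unique_block (hw : 0 < w) (hsub : IsSubdesign Y X)
    (hc : ∀ B ∈ W.blocks, Set.InjOn (c B) B)
    (hF : ∀ i j, i ≠ j → ∀ a b, ∃! f, f ∈ F ∧ f i = a ∧ f j = b)
    (u v : Pt w X) (huv : u ≠ v) : ∃! D, IsBlock W Y X c F D ∧ u ∈ D ∧ v ∈ D := by
  rcases u with ⟨p, a⟩ | a <;> rcases v with ⟨q, b⟩ | b
  · by_cases hpq : p = q
    · subst hpq
      have := exists_unique_block_fiber (Y := Y) (W := W) (c := c) (F := F) p a b.1
        (fun h => huv (by rw [Subtype.ext h]))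
      rwa [fiberEmb_of_notMem p b.2] at this
    · obtain ⟨B, ⟨hB, hp, hq⟩, hBuniq⟩ := W.pairCover p q hpq
      obtain ⟨f, ⟨hf, hfa, hfb⟩, hfuniq⟩ :=
        hF (c B p) (c B q) (fun h => hpq (hc B hB hp hq h)) a b
      refine ⟨graphBlock X B (c B) f, ⟨Or.inr ⟨B, hB, f, hf, rfl⟩, ?_, ?_⟩, ?_⟩
      · exact (inl_mem_graphBlock _ _ _ _ _).2 ⟨hp, hfa⟩
      · exact (inl_mem_graphBlock _ _ _ _ _).2 ⟨hq, hfb⟩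
      · rintro D ⟨⟨r, C, hC, rfl⟩ | ⟨B', hB', f', hf', rfl⟩, h1, h2⟩
        · rw [inl_mem_map_fiberEmb] at h1 h2
          exact absurd (h1.1.trans h2.1.symm) hpq
        · rw [inl_mem_graphBlock] at h1 h2
          obtain rfl := hBuniq B' ⟨hB', h1.1, h2.1⟩
          rw [hfuniq f' ⟨hf', h1.2, h2.2⟩]
  · have := exists_unique_block_fiber (Y := Y) (W := W) (c := c) (F := F) p a b.1
      (fun h => a.2 (h ▸ b.2))
    rwa [fiberEmb_of_mem p b.2] at this
  · have := exists_unique_block_fiber (Y := Y) (W := W) (c := c) (F := F) q b a.1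
      (fun h => b.2 (h ▸ a.2))
    rw [fiberEmb_of_mem q a.2] at this
    simpa only [and_comm (a := Sum.inr a ∈ _)] using this
  · have hab : a.1 ≠ b.1 := fun h => huv (by rw [Subtype.ext h])
    obtain ⟨C, ⟨hC, haC, hbC⟩, huniq⟩ := Y.pairCover a.1 b.1 hab
    have hCX : C ⊆ X := by
      refine hsub C hC (Finset.one_lt_card.2 ⟨a.1, ?_, b.1, ?_, hab⟩)
      · exact Finset.mem_inter.2 ⟨haC, a.2⟩
      · exact Finset.mem_inter.2 ⟨hbC, b.2⟩
    refine ⟨C.map (fiberEmb X ⟨0, hw⟩), ⟨Or.inl ⟨_, C, hC, rfl⟩, ?_, ?_⟩, ?_⟩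
    · exact (inr_mem_map_fiberEmb _ _ _).2 haC
    · exact (inr_mem_map_fiberEmb _ _ _).2 hbC
    · rintro D ⟨⟨r, C', hC', rfl⟩ | ⟨B', hB', f', hf', rfl⟩, h1, h2⟩
      · rw [inr_mem_map_fiberEmb] at h1 h2
        obtain rfl := huniq C' ⟨hC', h1, h2⟩
        exact map_fiberEmb_of_subset _ _ hCX
      · exact absurd h1 (inr_notMem_graphBlock _ _ _ _)

end

/-- A `2`-`(w,k,1)` design, a transversal design `TD(k, y-x)` and a
`2`-`(y,k,1)` design with an `x`-point subdesign produce a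
`2`-`(w(y-x)+x, k, 1)` design. -/
theorem statement8 (k w x y : ℕ) (hk : 3 ≤ k) (hw : 0 < w) (hx : 0 < x)
    (hxy : x < y) (W : Design (Fin w) k)
    (T : TransversalDesign (Fin (k * (y - x))) k (y - x))
    (Y : Design (Fin y) k) (X : Finset (Fin y)) (hX : X.card = x)
    (hsub : IsSubdesign Y X) :
    Nonempty (Design (Fin (w * (y - x) + x)) k) := by
  classical
  have hM : Fintype.card {a : Fin y // a ∉ X} = y - x := by
    rw [Fintype.card_subtype_compl]
    simp [hX]
  obtain ⟨F, hF⟩ := exists_orthogonal_array hM T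
  have hlabel : ∀ B : Finset (Fin w), ∃ c : Fin w → Fin k, B ∈ W.blocks → Set.InjOn c B := by
    intro B
    by_cases hB : B ∈ W.blocks
    · let e := B.equivFinOfCardEq (W.blockSize B hB)
      -- the value of the labelling outside `B` is irrelevant; `0` is available since `0 < k`
      refine ⟨fun p => if h : p ∈ B then e ⟨p, h⟩ else ⟨0, by omega⟩, fun _ p hp q hq h => ?_⟩
      have hp' : p ∈ B := hp
      have hq' : q ∈ B := hq
      simpa [hp', hq'] using h
    · exact ⟨fun _ => ⟨0, by omega⟩, fun h => absurd h hB⟩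
  choose c hc using hlabel
  refine design_of_pred (P := Pt w X) ?_ (IsBlock W Y X c F) ?_
    (exists_unique_block hw hsub hc hF)
  · simp only [Fintype.card_sum, Fintype.card_prod, hM, Fintype.card_fin, Fintype.card_coe, hX]
  · rintro D (⟨p, C, hC, rfl⟩ | ⟨B, hB, f, hf, rfl⟩)
    · rw [Finset.card_map]
      exact Y.blockSize C hC
    · rw [graphBlock, Finset.card_map]
      exact W.blockSize B hB
end

section
/- Let p be a prime and let q and m be powers of p with q > 1 and m > 1. Let E be the finite field with q^m elements, F its subfield with q elements, σ : E → E the map x ↦ x^q, and T : E → F the trace map. If a ∈ E satisfies T(a) ≠ 0 and h : E → E is the map x ↦ σ(x) + a, then h is a permutation of E of order pm, and the cyclic group generated by h is semiregular on E. -/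
/-!
Iterating `h : x ↦ x ^ q + a` gives `h^i x = x ^ (q ^ i) + ∑_{j < i} a ^ (q ^ j)`. As `x ^ (q ^ m) = x`
on `E`, the power `h^m` is translation by the trace `T a ≠ 0`, which moves every point, while
`h^(m * p)` is translation by `p • T a = 0`. Since `m * p` is a power of `p`, every `h`-orbit
therefore has length exactly `p * m`, which gives both the order and semiregularity.
-/

theorem iterate_pow_add {E : Type*} [Field E] (p e : ℕ) [Fact p.Prime] [CharP E p]
    (a x : E) (i : ℕ) :
    (fun y : E => y ^ p ^ e + a)^[i] x =
      x ^ (p ^ e) ^ i + ∑ j ∈ Finset.range i, a ^ (p ^ e) ^ j := by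
  induction i with
  | zero => simp
  | succ i ih =>
    rw [Function.iterate_succ_apply', ih, Finset.sum_range_succ']
    simp only [add_pow_char_pow, sum_pow_char_pow, pow_succ, pow_mul, pow_zero, pow_one,
      add_assoc]

theorem statement9 (p q m : ℕ) (hp : p.Prime)
    (hq : ∃ e : ℕ, 1 ≤ e ∧ q = p ^ e) (hm : ∃ f : ℕ, 1 ≤ f ∧ m = p ^ f)
    (E : Type) [Field E] [Fintype E] (hE : Fintype.card E = q ^ m)
    (a : E) (ha : (∑ j ∈ Finset.range m, a ^ q ^ j) ≠ 0) :
    ∃ g : Equiv.Perm E, (∀ x : E, g x = x ^ q + a) ∧ orderOf g = p * m ∧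
      ∀ i : ℕ, g ^ i ≠ 1 → ∀ x : E, (g ^ i) x ≠ x := by
  obtain ⟨e, -, rfl⟩ := hq
  obtain ⟨f, -, rfl⟩ := hm
  have : Fact p.Prime := ⟨hp⟩
  have : CharP E p := charP_of_card_eq_prime_pow (f := e * p ^ f) (by rw [hE, pow_mul])
  set t := ∑ j ∈ Finset.range (p ^ f), a ^ (p ^ e) ^ j with ht
  let g : Equiv.Perm E := (iterateFrobeniusEquiv E p e).toEquiv.trans (Equiv.addRight a)
  have hg : ∀ x, g x = x ^ p ^ e + a := fun x => by simp [g, iterateFrobenius_def]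
  have hgf : (g : E → E) = fun x => x ^ p ^ e + a := funext hg
  have hgm : g^[p ^ f] = (· + t) := by
    funext x
    rw [hgf, iterate_pow_add, ← hE, FiniteField.pow_card]
  have hmin : ∀ x, Function.minimalPeriod g x = p ^ (f + 1) := fun x => by
    apply Function.minimalPeriod_eq_prime_pow
    · rw [Function.IsPeriodicPt, hgm, Function.IsFixedPt]
      simpa using ha
    · rw [Function.IsPeriodicPt, pow_succ, Function.iterate_mul, hgm, add_right_iterate,
        Function.IsFixedPt]
      simp
  have hfix : ∀ i x, (g ^ i) x = x ↔ p ^ (f + 1) ∣ i := fun i x => by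
    rw [← hmin x, ← Function.isPeriodicPt_iff_minimalPeriod_dvd, Function.IsPeriodicPt,
      Function.IsFixedPt, Equiv.Perm.iterate_eq_pow]
  have hone : ∀ i, g ^ i = 1 ↔ p ^ (f + 1) ∣ i := fun i =>
    ⟨fun h => (hfix i 0).1 (by rw [h]; rfl), fun h => Equiv.ext fun x => (hfix i x).2 h⟩
  refine ⟨g, hg, ?_, fun i hi x hx => hi ((hone i).2 ((hfix i x).1 hx))⟩
  rw [← pow_succ']
  exact Nat.dvd_antisymm (orderOf_dvd_of_pow_eq_one ((hone _).2 dvd_rfl))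
    ((hone _).1 (pow_orderOf_eq_one g))
end

section
/- Let p be a prime, let q and m be powers of p with q > 1 and m > 1, and let k be an integer with 3 ≤ k < q. Then there exists a (k, q^m)-net having a cyclic automorphism group of order m that is semiregular on the points, semiregular on the lines, and leaves each parallel class invariant. -/
/-!
Let `r = m / p`, let `K` be the field with `q ^ p` elements and let `W = K ^ r`, so that `W` has
`q ^ m` elements. The affine permutation `h` of `W` which cyclically shifts the coordinates and then
adds `1` to one of them satisfies `h ^ r = (translation by the all-one vector)`; as `K` has
characteristic `p`, `h` has order `m = r * p`, and since `h ^ r` has no fixed point and `m` is a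
power of `p`, every orbit of `h` has length exactly `m`.

The points of the net are the pairs `(x, y)` in `W × W`, and its lines are `y = a x + b` with `b` in
`W` and `a` in a set of `k` scalars of `K`. The automorphism is `(x, y) ↦ (T x, h y)`, where `T` is
the coordinate shift, the linear part of `h`. It maps the line `(a, b)` to the line `(a, h b)`, so
that semiregularity on points and on lines both follow from that of `h` on `W`.

The net axioms and the semiregularity are proved in `exists_net_of_labels` for a net presented by
labellings `ℓ i` of the points, one per parallel class, such that any two labels are coordinates.
-/

/-- A `(k,n)`-net on a point type `α` (with `n^2` points): `k*n` lines of size `n`,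
two distinct lines meet in at most one point, and the lines are partitioned into
`k` parallel classes, each of which partitions the point set. -/
structure Net (α : Type) [DecidableEq α] (k n : ℕ) where
  lines : Finset (Finset α)
  classes : Finset (Finset (Finset α))
  lines_card : lines.card = k * n
  line_size : ∀ L ∈ lines, L.card = n
  lines_meet : ∀ L ∈ lines, ∀ L' ∈ lines, L ≠ L' → (L ∩ L').card ≤ 1
  classes_card : classes.card = k
  class_mem : ∀ c ∈ classes, ∀ L ∈ c, L ∈ lines
  line_class : ∀ L ∈ lines, ∃! c, c ∈ classes ∧ L ∈ c
  class_partition : ∀ c ∈ classes, ∀ x : α, ∃! L, L ∈ c ∧ x ∈ L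

/-! ### Periods in prime power orbits -/

/-- In an orbit of length dividing a prime power `p ^ (s + 1)` but not dividing `p ^ s`, every period
is a multiple of `p ^ (s + 1)`. -/
lemma dvd_of_isPeriodicPt {β : Type*} {p s : ℕ} (hp : p.Prime) (f : β → β) (x : β)
    (h1 : Function.IsPeriodicPt f (p ^ (s + 1)) x)
    (h2 : ¬ Function.IsPeriodicPt f (p ^ s) x) (i : ℕ)
    (hi : Function.IsPeriodicPt f i x) : p ^ (s + 1) ∣ i := by
  have h3 := hi.gcd h1
  obtain ⟨t, ht, hgt⟩ := (Nat.dvd_prime_pow hp).1 (Nat.gcd_dvd_right i (p ^ (s + 1)))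
  rw [hgt] at h3
  rcases Nat.lt_or_ge t (s + 1) with h | h
  · exact absurd (h3.trans_dvd (pow_dvd_pow p (by omega))) h2
  · have : t = s + 1 := by omega
    subst this
    exact hgt ▸ Nat.gcd_dvd_left i _

/-! ### Nets from labellings -/

/-- The line of the parallel class `i` carrying the label `b`. -/
def labelLine {α β ι : Type*} [Fintype α] [DecidableEq β] (ℓ : ι → α → β) (i : ι) (b : β) :
    Finset α := Finset.univ.filter (fun x => ℓ i x = b)

@[simp] lemma mem_labelLine {α β ι : Type*} [Fintype α] [DecidableEq β] (ℓ : ι → α → β) (i : ι)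
    (b : β) (x : α) : x ∈ labelLine ℓ i b ↔ ℓ i x = b := by simp [labelLine]

/-- If any two of the `k` labellings `ℓ i` are coordinates on the points, then their fibres form a
net. A point permutation `g` acting on the labels of every class through the same permutation `h`,
all of whose cycles have length `m`, is then an automorphism with the required properties. -/
lemma exists_net_of_labels {α : Type} [Fintype α] [DecidableEq α] {β : Type*} [Fintype β]
    [DecidableEq β] (k n m : ℕ) (hk : 2 ≤ k) (hn : 2 ≤ n) (hβ : Fintype.card β = n)
    (ℓ : Fin k → α → β)
    (hbij : ∀ i j, i ≠ j → Function.Bijective (fun x => (ℓ i x, ℓ j x)))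
    (g : Equiv.Perm α) (h : Equiv.Perm β) (hgh : ∀ i x, ℓ i (g x) = h (ℓ i x))
    (hm : h ^ m = 1) (hfree : ∀ (t : ℕ) (b : β), (h ^ t) b = b → m ∣ t) :
    ∃ (Nt : Net α k n),
      (∀ L : Finset α, L ∈ Nt.lines ↔ L.image g ∈ Nt.lines) ∧
      orderOf g = m ∧
      (∀ c ∈ Nt.classes, ∀ L ∈ c, L.image g ∈ c) ∧
      (∀ i : ℕ, g ^ i ≠ 1 → ∀ x, (g ^ i) x ≠ x) ∧
      (∀ i : ℕ, g ^ i ≠ 1 → ∀ L ∈ Nt.lines, L.image (g ^ i) ≠ L) := by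
  have hother : ∀ i : Fin k, ∃ j, i ≠ j := by
    have : Nontrivial (Fin k) := Fin.nontrivial_iff_two_le.2 hk
    intro i
    obtain ⟨j, hj⟩ := exists_ne i
    exact ⟨j, hj.symm⟩
  have hsize : ∀ i b, (labelLine ℓ i b).card = n := by
    intro i b
    obtain ⟨j, hj⟩ := hother i
    rw [← hβ, ← Finset.card_univ]
    refine Finset.card_bij (fun x _ => ℓ j x) (by simp) ?_ ?_
    · intro x hx y hy hxy
      rw [mem_labelLine] at hx hy
      exact (hbij i j hj).1 (Prod.ext (hx.trans hy.symm) hxy)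
    · intro c _
      obtain ⟨x, hx⟩ := (hbij i j hj).2 (b, c)
      exact ⟨x, by simpa using congrArg Prod.fst hx, congrArg Prod.snd hx⟩
  have hmeet : ∀ i j b c, i ≠ j → (labelLine ℓ i b ∩ labelLine ℓ j c).card ≤ 1 := by
    intro i j b c hij
    rw [Finset.card_le_one]
    intro x hx y hy
    simp only [Finset.mem_inter, mem_labelLine] at hx hy
    exact (hbij i j hij).1 (Prod.ext (hx.1.trans hy.1.symm) (hx.2.trans hy.2.symm))
  have hinj : ∀ i j b c, labelLine ℓ i b = labelLine ℓ j c → i = j ∧ b = c := by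
    intro i j b c hE
    -- lines of different classes share at most one point, but a line has `n ≥ 2` of them
    have hij : i = j := by
      by_contra hij
      have h1 := hmeet i j b c hij
      rw [hE, Finset.inter_self, hsize] at h1
      omega
    refine ⟨hij, ?_⟩
    subst hij
    have hne : (labelLine ℓ i b).Nonempty := by
      rw [← Finset.card_pos, hsize]; omega
    obtain ⟨x, hx⟩ := hne
    have hx' := hx
    rw [hE] at hx'
    rw [mem_labelLine] at hx hx'
    exact hx.symm.trans hx'
  have hgpow : ∀ (t : ℕ) i x, ℓ i ((g ^ t) x) = (h ^ t) (ℓ i x) := by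
    intro t
    induction t with
    | zero => simp
    | succ t ih =>
      intro i x
      rw [pow_succ', pow_succ', Equiv.Perm.mul_apply, Equiv.Perm.mul_apply, hgh, ih]
  have himg : ∀ (t : ℕ) i b, (labelLine ℓ i b).image (g ^ t) = labelLine ℓ i ((h ^ t) b) := by
    intro t i b
    ext x
    simp only [Finset.mem_image, mem_labelLine]
    constructor
    · rintro ⟨y, rfl, rfl⟩
      exact hgpow t i y
    · intro hx
      refine ⟨(g ^ t)⁻¹ x, ?_, by simp⟩
      apply (h ^ t).injective
      rw [← hgpow, ← hx]
      simp
  let hi0 : Fin k := ⟨0, by omega⟩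
  have hgm : g ^ m = 1 := by
    ext x
    obtain ⟨j, hj⟩ := hother hi0
    apply (hbij hi0 j hj).1
    simp [hgpow, hm]
  have hpts : ∀ i : ℕ, g ^ i ≠ 1 → ∀ x, (g ^ i) x ≠ x := by
    intro t ht x hx
    apply ht
    obtain ⟨u, rfl⟩ := hfree t (ℓ hi0 x) (by rw [← hgpow, hx])
    rw [pow_mul, hgm, one_pow]
  have hαne : Nonempty α := by
    have hne : (labelLine ℓ hi0 (Fintype.card_pos_iff.1 (by omega)).some).Nonempty := by
      rw [← Finset.card_pos, hsize]; omega
    exact ⟨hne.choose⟩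
  let Nt : Net α k n :=
    { lines := Finset.univ.image (fun z : Fin k × β => labelLine ℓ z.1 z.2)
      classes := Finset.univ.image (fun i => Finset.univ.image (labelLine ℓ i))
      lines_card := by
        rw [Finset.card_image_of_injective]
        · simp [hβ]
        · rintro ⟨i, b⟩ ⟨j, c⟩ hE
          obtain ⟨rfl, rfl⟩ := hinj _ _ _ _ hE
          rfl
      line_size := by
        intro L hL
        obtain ⟨z, -, rfl⟩ := Finset.mem_image.1 hL
        exact hsize _ _
      lines_meet := by
        intro L hL L' hL' hne
        obtain ⟨⟨i, b⟩, -, rfl⟩ := Finset.mem_image.1 hL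
        obtain ⟨⟨j, c⟩, -, rfl⟩ := Finset.mem_image.1 hL'
        by_cases hij : i = j
        · subst hij
          have : labelLine ℓ i b ∩ labelLine ℓ i c = ∅ := by
            ext x
            simp only [Finset.mem_inter, mem_labelLine, Finset.notMem_empty, iff_false]
            rintro ⟨rfl, rfl⟩
            exact hne rfl
          simp [this]
        · exact hmeet _ _ _ _ hij
      classes_card := by
        rw [Finset.card_image_of_injective]
        · simp
        · intro i j hE
          have hb : Nonempty β := Fintype.card_pos_iff.1 (by omega)
          have : labelLine ℓ i hb.some ∈ Finset.univ.image (labelLine ℓ j) := by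
            have hE' : Finset.univ.image (labelLine ℓ i) = Finset.univ.image (labelLine ℓ j) := hE
            rw [← hE']
            exact Finset.mem_image_of_mem _ (Finset.mem_univ _)
          obtain ⟨c, -, hc⟩ := Finset.mem_image.1 this
          exact (hinj _ _ _ _ hc).1.symm
      class_mem := by
        intro c hc L hL
        obtain ⟨i, -, rfl⟩ := Finset.mem_image.1 hc
        obtain ⟨b, -, rfl⟩ := Finset.mem_image.1 hL
        exact Finset.mem_image.2 ⟨(i, b), Finset.mem_univ _, rfl⟩
      line_class := by
        intro L hL
        obtain ⟨⟨i, b⟩, -, rfl⟩ := Finset.mem_image.1 hL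
        refine ⟨Finset.univ.image (labelLine ℓ i), ⟨Finset.mem_image_of_mem _ (Finset.mem_univ _),
          Finset.mem_image_of_mem _ (Finset.mem_univ _)⟩, ?_⟩
        rintro c ⟨hc, hLc⟩
        obtain ⟨j, -, rfl⟩ := Finset.mem_image.1 hc
        obtain ⟨b', -, hb'⟩ := Finset.mem_image.1 hLc
        rw [(hinj _ _ _ _ hb').1]
      class_partition := by
        intro c hc x
        obtain ⟨i, -, rfl⟩ := Finset.mem_image.1 hc
        refine ⟨labelLine ℓ i (ℓ i x), ⟨Finset.mem_image_of_mem _ (Finset.mem_univ _), by simp⟩, ?_⟩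
        rintro L ⟨hL, hx⟩
        obtain ⟨b, -, rfl⟩ := Finset.mem_image.1 hL
        rw [mem_labelLine] at hx
        rw [hx] }
  refine ⟨Nt, ?_, ?_, ?_, hpts, ?_⟩
  · intro L
    constructor
    · intro hL
      obtain ⟨⟨i, b⟩, -, rfl⟩ := Finset.mem_image.1 hL
      have := himg 1 i b
      simp only [pow_one] at this
      rw [this]
      exact Finset.mem_image.2 ⟨(i, h b), Finset.mem_univ _, rfl⟩
    · intro hL
      obtain ⟨⟨i, b⟩, -, hib⟩ := Finset.mem_image.1 hL
      have := himg 1 i (h⁻¹ b)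
      change labelLine ℓ i b = _ at hib
      rw [pow_one, pow_one, ← Equiv.Perm.mul_apply, mul_inv_cancel, Equiv.Perm.one_apply] at this
      have hE : L = labelLine ℓ i (h⁻¹ b) :=
        Finset.image_injective g.injective (hib.symm.trans this.symm)
      exact Finset.mem_image.2 ⟨(i, h⁻¹ b), Finset.mem_univ _, hE.symm⟩
  · refine Nat.dvd_antisymm (orderOf_dvd_of_pow_eq_one hgm) ?_
    refine hfree _ (ℓ hi0 hαne.some) ?_
    rw [← hgpow, pow_orderOf_eq_one, Equiv.Perm.one_apply]
  · intro c hc L hL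
    obtain ⟨i, -, rfl⟩ := Finset.mem_image.1 hc
    obtain ⟨b, -, rfl⟩ := Finset.mem_image.1 hL
    have := himg 1 i b
    simp only [pow_one] at this
    rw [this]
    exact Finset.mem_image_of_mem _ (Finset.mem_univ _)
  · intro t ht L hL hE
    obtain ⟨⟨i, b⟩, -, rfl⟩ := Finset.mem_image.1 hL
    rw [himg] at hE
    obtain ⟨u, rfl⟩ := hfree t b (hinj _ _ _ _ hE).2
    exact ht (by rw [pow_mul, hgm, one_pow])

/-! ### The shift with carry on `K ^ r` -/

/-- The affine permutation of `K ^ r` which shifts the coordinates cyclically and then adds `c`. -/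
def shiftAdd {K : Type*} [AddCommGroup K] (r : ℕ) (c : ZMod r → K) : Equiv.Perm (ZMod r → K) where
  toFun b := fun i => b (i - 1) + c i
  invFun b := fun i => b (i + 1) - c (i + 1)
  left_inv b := by ext i; simp
  right_inv b := by ext i; simp

lemma shiftAdd_apply {K : Type*} [AddCommGroup K] (r : ℕ) (c b : ZMod r → K) (i : ZMod r) :
    shiftAdd r c b i = b (i - 1) + c i := rfl

lemma shiftAdd_pow {K : Type*} [AddCommGroup K] (r : ℕ) (c : ZMod r → K) (t : ℕ)
    (b : ZMod r → K) (i : ZMod r) :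
    (shiftAdd r c ^ t) b i = b (i - t) + ∑ j ∈ Finset.range t, c (i - j) := by
  induction t generalizing i with
  | zero => simp
  | succ t ih =>
    have h1 : i - 1 - (t : ZMod r) = i - ((t + 1 : ℕ) : ZMod r) := by push_cast; ring
    have h2 : ∀ j ∈ Finset.range t, c (i - 1 - (j : ZMod r)) = c (i - ((j + 1 : ℕ) : ZMod r)) := by
      intro j _
      congr 1; push_cast; ring
    rw [pow_succ', Equiv.Perm.mul_apply, shiftAdd_apply, ih, Finset.sum_range_succ', add_assoc, h1,
      Finset.sum_congr rfl h2, Nat.cast_zero, sub_zero]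

/-- One full turn of the shift meets the coordinate `0`, where `1` is added, exactly once. -/
lemma shiftAdd_single_pow_self {K : Type*} [Ring K] (r : ℕ) [NeZero r] (b : ZMod r → K) :
    (shiftAdd r (Pi.single 0 1) ^ r) b = b + 1 := by
  ext i
  rw [shiftAdd_pow, Finset.sum_eq_single i.val]
  · simp
  · intro j hj hne
    refine Pi.single_eq_of_ne (fun h0 => hne ?_) _
    rw [sub_eq_zero.1 h0, ZMod.val_natCast, Nat.mod_eq_of_lt (Finset.mem_range.1 hj)]
  · intro h0
    exact absurd (Finset.mem_range.2 (ZMod.val_lt i)) h0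

lemma shiftAdd_single_pow_mul {K : Type*} [Ring K] (r : ℕ) [NeZero r] (t : ℕ) (b : ZMod r → K)
    (i : ZMod r) : ((shiftAdd r (Pi.single 0 1) ^ r) ^ t) b i = b i + t := by
  induction t with
  | zero => simp
  | succ t ih =>
    rw [pow_succ', Equiv.Perm.mul_apply, shiftAdd_single_pow_self, Pi.add_apply, ih, Pi.one_apply,
      Nat.cast_succ, add_assoc]

/-- The lines `y = a x + b` are permuted by `(x, y) ↦ (T x, T y + c)`, with intercepts moving by
`b ↦ T b + c`, where `T` is the cyclic shift. -/
lemma shiftAdd_sub_smul {K : Type*} [CommRing K] (r : ℕ) (c x y : ZMod r → K) (a : K) :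
    shiftAdd r c y - a • shiftAdd r 0 x = shiftAdd r c (y - a • x) := by
  ext i
  simp only [Pi.sub_apply, Pi.smul_apply, shiftAdd_apply, Pi.zero_apply, smul_eq_mul]
  ring

/-! ### The Desarguesian net over `K` -/

/-- Let `q, m > 1` be powers of a prime `p` and let `3 ≤ k < q`. Then there is a
`(k, q^m)`-net having a cyclic automorphism group of order `m` that is
semiregular on the points, semiregular on the lines, and leaves each parallel
class invariant. -/
theorem statement11 (p q m k : ℕ) (hp : p.Prime)
    (hq : ∃ e : ℕ, 1 ≤ e ∧ q = p ^ e) (hm : ∃ f : ℕ, 1 ≤ f ∧ m = p ^ f)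
    (hk : 3 ≤ k) (hkq : k < q) :
    ∃ (Nt : Net (Fin ((q ^ m) ^ 2)) k (q ^ m))
      (g : Equiv.Perm (Fin ((q ^ m) ^ 2))),
      (∀ L : Finset (Fin ((q ^ m) ^ 2)), L ∈ Nt.lines ↔ L.image g ∈ Nt.lines) ∧
      orderOf g = m ∧
      (∀ c ∈ Nt.classes, ∀ L ∈ c, L.image g ∈ c) ∧
      (∀ i : ℕ, g ^ i ≠ 1 → ∀ x, (g ^ i) x ≠ x) ∧
      (∀ i : ℕ, g ^ i ≠ 1 → ∀ L ∈ Nt.lines, L.image (g ^ i) ≠ L) := by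
  obtain ⟨e, he, rfl⟩ := hq
  obtain ⟨f, hf, rfl⟩ := hm
  obtain ⟨s, rfl⟩ : ∃ s, f = s + 1 := ⟨f - 1, by omega⟩
  have : Fact p.Prime := ⟨hp⟩
  have : NeZero (p ^ s) := ⟨pow_ne_zero _ hp.ne_zero⟩
  classical
  -- `q ^ p` elements make `K ^ (m / p)` have `q ^ m`, and give enough slopes since `k < q`
  let K := GaloisField p (e * p)
  let _ : Fintype K := Fintype.ofFinite K
  have hK : Fintype.card K = (p ^ e) ^ p := by
    rw [← Nat.card_eq_fintype_card, GaloisField.card p _ (by have := hp.pos; positivity), pow_mul]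
  let W := ZMod (p ^ s) → K
  have hW : Fintype.card W = (p ^ e) ^ p ^ (s + 1) := by
    simp only [W, Fintype.card_fun, hK, ZMod.card]
    rw [← pow_mul, ← pow_succ']
  have hq1 : 1 ≤ p ^ e := Nat.one_le_pow _ _ hp.pos
  have hkK : k ≤ (p ^ e) ^ p := hkq.le.trans (Nat.le_self_pow hp.ne_zero _)
  obtain ⟨a⟩ : Nonempty (Fin k ↪ K) :=
    Function.Embedding.nonempty_of_card_le (by simpa [hK] using hkK)
  let E : Fin (((p ^ e) ^ p ^ (s + 1)) ^ 2) ≃ W × W := Fintype.equivOfCardEq (by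
    rw [Fintype.card_prod, hW, Fintype.card_fin, sq])
  let h : Equiv.Perm W := shiftAdd (p ^ s) (Pi.single 0 1)
  let g : Equiv.Perm (Fin (((p ^ e) ^ p ^ (s + 1)) ^ 2)) :=
    (E.trans (Equiv.prodCongr (shiftAdd (p ^ s) 0) h)).trans E.symm
  have hm : h ^ p ^ (s + 1) = 1 := by
    ext b i
    rw [pow_succ, pow_mul, shiftAdd_single_pow_mul, CharP.cast_eq_zero, add_zero]
    rfl
  have hper : ∀ (t : ℕ) (b : W), Function.IsPeriodicPt h t b ↔ (h ^ t) b = b := by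
    intro t b
    rw [Function.IsPeriodicPt, Function.IsFixedPt, Equiv.Perm.iterate_eq_pow]
  refine Exists.imp (fun Nt hNt => ⟨g, hNt⟩) (exists_net_of_labels k _ (p ^ (s + 1)) (by omega) ?_ hW
    (fun i z => (E z).2 - a i • (E z).1) ?_ g h ?_ hm ?_)
  · have : p ^ e ≤ (p ^ e) ^ p ^ (s + 1) := Nat.le_self_pow (pow_ne_zero _ hp.ne_zero) _
    omega
  · intro i j hij
    have hne : a i - a j ≠ 0 := sub_ne_zero.2 (a.injective.ne hij)
    rw [Fintype.bijective_iff_injective_and_card]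
    constructor
    · intro z z' hz
      have h1 := congrArg Prod.fst hz
      have h2 := congrArg Prod.snd hz
      simp only at h1 h2
      have h3 : (a i - a j) • ((E z).1 - (E z').1) = 0 := by
        rw [sub_smul, smul_sub, smul_sub]
        linear_combination h2 - h1
      have h4 : (E z).1 = (E z').1 := sub_eq_zero.1 ((smul_eq_zero.1 h3).resolve_left hne)
      rw [h4] at h1
      exact E.injective (Prod.ext h4 (sub_left_injective h1))
    · rw [Fintype.card_prod, hW, Fintype.card_fin, sq]
  · intro i z
    simp only [g, Equiv.trans_apply, Equiv.apply_symm_apply]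
    exact shiftAdd_sub_smul _ _ _ _ _
  · intro t b hb
    refine dvd_of_isPeriodicPt hp h b ((hper _ _).2 (by rw [hm]; rfl)) ?_ t ((hper _ _).2 hb)
    rw [hper, shiftAdd_single_pow_self]
    intro h0
    exact one_ne_zero (congrFun (add_eq_left.1 h0) 0)
end

section
/- Let k ≥ 3 be an integer with distinct prime factors p_1, …, p_r, and for each i let m_i > k be a power of p_i; set π = m_1⋯m_r (so that k divides π). Then there exists an integer N, depending only on k, such that for every integer s > N there is a (k, s·m_1^{m_1}⋯m_r^{m_r})-net having a cyclic automorphism group of order π that is semiregular on the points, semiregular on the lines, and leaves each parallel class invariant. -/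
/-! ### Orthogonal arrays: MacNeish and Wilson -/

/-- An orthogonal array of strength 2 and index 1 with columns indexed by `I` and symbols in `X`
(equivalently a transversal design, or `|I| - 2` mutually orthogonal Latin squares): a family of
rows such that any two distinct columns show every ordered pair of symbols exactly once.
The type of rows is left free. -/
def HasOA (I X : Type) : Prop :=
  ∃ (R : Type) (A : R → I → X), ∀ i j, i ≠ j → Function.Bijective (fun r => (A r i, A r j))

theorem HasOA.congr {I X Y : Type} (e : X ≃ Y) (h : HasOA I X) : HasOA I Y := by
  obtain ⟨R, A, hA⟩ := h
  refine ⟨R, fun r i => e (A r i), fun i j hij => ?_⟩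
  exact (e.prodCongr e).bijective.comp (hA i j hij)

theorem HasOA.restrict {I J X : Type} (f : J → I) (hf : Function.Injective f) (h : HasOA I X) :
    HasOA J X := by
  obtain ⟨R, A, hA⟩ := h
  exact ⟨R, fun r i => A r (f i), fun i j hij => hA _ _ (hf.ne hij)⟩

theorem HasOA.prod {I X Y : Type} (h : HasOA I X) (h' : HasOA I Y) : HasOA I (X × Y) := by
  obtain ⟨R, A, hA⟩ := h
  obtain ⟨R', A', hA'⟩ := h'
  refine ⟨R × R', fun r i => (A r.1 i, A' r.2 i), fun i j hij => ?_⟩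
  exact (Equiv.prodProdProdComm X X Y Y).bijective.comp ((hA i j hij).prodMap (hA' i j hij))

/-- The lines `y + a i * x = const` of a ring, whose slopes `a i` have pairwise unit differences,
meet as in an affine plane. -/
theorem ring_bijective {I R : Type} [CommRing R] (a : I → R)
    (ha : ∀ i j, i ≠ j → IsUnit (a i - a j)) (i j : I) (hij : i ≠ j) :
    Function.Bijective (fun r : R × R => (r.2 + a i * r.1, r.2 + a j * r.1)) := by
  obtain ⟨u, hu⟩ := ha i j hij
  have huv : (a i - a j) * (↑u⁻¹ : R) = 1 := by rw [← hu]; simp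
  constructor
  · rintro ⟨x, y⟩ ⟨x', y'⟩ h
    simp only [Prod.mk.injEq] at h
    obtain ⟨h1, h2⟩ := h
    have hx : x = x' := by linear_combination (x' - x) * huv + (↑u⁻¹ : R) * h1 - (↑u⁻¹ : R) * h2
    subst hx
    simpa using h1
  · rintro ⟨b, c⟩
    refine ⟨((↑u⁻¹ : R) * (b - c), b - a i * ((↑u⁻¹ : R) * (b - c))), ?_⟩
    simp only [Prod.mk.injEq]
    constructor
    · ring
    · linear_combination (c - b) * huv

theorem hasOA_of_field (I F : Type) [Field F] (a : I → F) (ha : Function.Injective a) :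
    HasOA I F :=
  ⟨F × F, fun r i => r.2 + a i * r.1, ring_bijective a fun _ _ hij =>
    (sub_ne_zero.2 (ha.ne hij)).isUnit⟩

/-- MacNeish's theorem: an array with `K` columns exists on `n` symbols as soon as every exact
prime power divisor of `n` is at least `K`. -/
theorem hasOA_macNeish (K n : ℕ) (hn : 0 < n)
    (h : ∀ p, p.Prime → p ∣ n → K ≤ p ^ n.factorization p) : HasOA (Fin K) (Fin n) := by
  induction n using Nat.recOnPosPrimePosCoprime with
  | prime_pow p e hp he =>
    have hK := h p hp (dvd_pow_self p he.ne')
    rw [hp.factorization_pow, Finsupp.single_eq_same] at hK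
    have : Fact p.Prime := ⟨hp⟩
    have : Finite (GaloisField p e) := inferInstance
    have hc : Nat.card (GaloisField p e) = p ^ e := GaloisField.card p e he.ne'
    let f : GaloisField p e ≃ Fin (p ^ e) := Finite.equivFinOfCardEq hc
    exact (hasOA_of_field (Fin K) (GaloisField p e) (fun i => f.symm (Fin.castLE hK i))
      (f.symm.injective.comp (Fin.castLE_injective hK))).congr f
  | zero => exact absurd hn (lt_irrefl 0)
  | one =>
    refine ⟨Unit, fun _ _ => 0, fun i j _ => ⟨fun _ _ _ => rfl, fun x => ⟨(), ?_⟩⟩⟩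
    exact Subsingleton.elim _ _
  | coprime a b ha hb hab iha ihb =>
    have hfa : ∀ p, p.Prime → p ∣ a → (a * b).factorization p = a.factorization p := by
      intro p hp hpa
      rw [Nat.factorization_mul (by omega) (by omega), Finsupp.add_apply,
        Nat.factorization_eq_zero_of_not_dvd (n := b) (fun hpb => ?_), add_zero]
      exact hp.one_lt.ne' (Nat.dvd_one.1 (hab ▸ Nat.dvd_gcd hpa hpb))
    have hfb : ∀ p, p.Prime → p ∣ b → (a * b).factorization p = b.factorization p := by
      intro p hp hpb
      rw [Nat.factorization_mul (by omega) (by omega), Finsupp.add_apply,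
        Nat.factorization_eq_zero_of_not_dvd (n := a) (fun hpa => ?_), zero_add]
      exact hp.one_lt.ne' (Nat.dvd_one.1 (hab ▸ Nat.dvd_gcd hpa hpb))
    have h1 := iha (by omega) fun p hp hpa => hfa p hp hpa ▸ h p hp (hpa.mul_right b)
    have h2 := ihb (by omega) fun p hp hpb => hfb p hp hpb ▸ h p hp (hpb.mul_left a)
    exact (h1.prod h2).congr finProdFinEquiv

/-- A form of MacNeish's condition that can be controlled by congruences. -/
theorem hasOA_of_dvd (K n : ℕ) (hn : 0 < n)
    (h : ∀ p, p.Prime → p ∣ n → K ≤ p ∨ p ^ K ∣ n) : HasOA (Fin K) (Fin n) := by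
  refine hasOA_macNeish K n hn fun p hp hpn => ?_
  rcases h p hp hpn with h | h
  · have := (hp.dvd_iff_one_le_factorization hn.ne').1 hpn
    exact h.trans (Nat.le_self_pow (by omega) p)
  · have := (hp.pow_dvd_iff_le_factorization hn.ne').1 h
    exact (Nat.lt_pow_self hp.one_lt).le.trans (Nat.pow_le_pow_right hp.pos this)

/-- Relabelling the symbols column by column, one row can be made constant. -/
theorem HasOA.exists_const_row {I X : Type} (x₀ : X) (i₀ j₀ : I) (hij : i₀ ≠ j₀)
    (h : HasOA I X) :
    ∃ (R : Type) (A : R → I → X) (r₀ : R), (∀ i, A r₀ i = x₀) ∧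
      ∀ i j, i ≠ j → Function.Bijective (fun r => (A r i, A r j)) := by
  classical
  obtain ⟨R, A, hA⟩ := h
  obtain ⟨r₀, -⟩ := (hA i₀ j₀ hij).2 (x₀, x₀)
  refine ⟨R, fun r i => Equiv.swap (A r₀ i) x₀ (A r i), r₀, fun i => by simp, fun i j hij => ?_⟩
  exact ((Equiv.swap (A r₀ i) x₀).prodCongr (Equiv.swap (A r₀ j) x₀)).bijective.comp (hA i j hij)

/-- Wilson's construction, for `|X| = m|T| + |U|` where `|U| ≤ |T|`. The extra column `none` of
the array on `T` is truncated to `U`; a row of that array is inflated by an array on `m` symbols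
when its extra symbol lies outside `U`, and otherwise by an array on `m + 1` symbols with a
constant row `none` removed, the symbol `none` standing for the extra symbol. An array on `U`
completes the construction. -/
theorem wilson {I T U M : Type} (ι : U → T) (hι : Function.Injective ι)
    (i₀ j₀ : I) (hij₀ : i₀ ≠ j₀)
    (hT : HasOA (Option I) T) (hM : HasOA I M) (hM1 : HasOA I (Option M)) (hU : HasOA I U) :
    HasOA I ((T × M) ⊕ U) := by
  obtain ⟨R, A, hA⟩ := hT
  obtain ⟨RM, AM, hAM⟩ := hM
  obtain ⟨RU, AU, hAU⟩ := hU
  obtain ⟨RN, AN, r₀, hr₀, hAN⟩ := hM1.exists_const_row none i₀ j₀ hij₀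
  -- the symbol of the inflated array at a position showing `t`, in a row with extra symbol `u`
  let g : T → U → Option M → (T × M) ⊕ U := fun t u o => o.elim (Sum.inr u) fun x => Sum.inl (t, x)
  let R1 := {B : R // A B none ∉ Set.range ι} × RM
  let R2 := {q : R × U // A q.1 none = ι q.2} × {r : RN // r ≠ r₀}
  let F1 : R1 → I → (T × M) ⊕ U := fun r i => Sum.inl (A r.1.1 (some i), AM r.2 i)
  let F2 : R2 → I → (T × M) ⊕ U := fun r i => g (A r.1.1.1 (some i)) r.1.1.2 (AN r.2.1 i)
  let F3 : RU → I → (T × M) ⊕ U := fun r i => Sum.inr (AU r i)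
  refine ⟨(R1 ⊕ R2) ⊕ RU, Sum.elim (Sum.elim F1 F2) F3, fun i j hij => ?_⟩
  have hsij : (some i : Option I) ≠ some j := by simpa using hij
  have injA : ∀ {B B' : R} {i j : Option I}, i ≠ j → A B i = A B' i → A B j = A B' j → B = B' :=
    fun hij h1 h2 => (hA _ _ hij).1 (Prod.ext h1 h2)
  have nn : ∀ r : {r : RN // r ≠ r₀}, ¬ (AN r.1 i = none ∧ AN r.1 j = none) := by
    rintro ⟨r, hr⟩ ⟨h1, h2⟩
    exact hr ((hAN i j hij).1 (Prod.ext (h1.trans (hr₀ i).symm) (h2.trans (hr₀ j).symm)))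
  constructor
  · have c12 : ∀ (r : R1) (s : R2), F1 r i = F2 s i → F1 r j = F2 s j → False := by
      rintro ⟨⟨B, hB⟩, r⟩ ⟨⟨⟨B', u⟩, hB'⟩, s⟩ h1 h2
      simp only [F1, F2, g] at h1 h2
      rcases e1 : AN s.1 i with _ | x <;> rcases e2 : AN s.1 j with _ | y <;>
        simp only [e1, e2, Option.elim, reduceCtorEq, Sum.inl.injEq, Prod.mk.injEq] at h1 h2
      have := injA hsij h1.1 h2.1
      subst this
      exact hB ⟨u, hB'.symm⟩
    have c23 : ∀ (s : R2) (r : RU), F2 s i = F3 r i → F2 s j = F3 r j → False := by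
      rintro ⟨⟨⟨B', u⟩, hB'⟩, s⟩ r h1 h2
      have := nn s
      simp only [F3, F2, g] at h1 h2
      rcases e1 : AN s.1 i with _ | x <;> rcases e2 : AN s.1 j with _ | y <;>
        simp_all [Option.elim]
    rintro ((r | r) | r) ((s | s) | s) h <;>
      simp only [Sum.elim_inl, Sum.elim_inr, Prod.mk.injEq] at h <;> obtain ⟨h1, h2⟩ := h
    · obtain ⟨⟨B, hB⟩, r⟩ := r
      obtain ⟨⟨B', hB'⟩, s⟩ := s
      simp only [F1, Sum.inl.injEq, Prod.mk.injEq] at h1 h2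
      have := injA hsij h1.1 h2.1
      subst this
      have : r = s := (hAM i j hij).1 (Prod.ext h1.2 h2.2)
      subst this
      rfl
    · exact (c12 _ _ h1 h2).elim
    · simp [F1, F3] at h1
    · exact (c12 _ _ h1.symm h2.symm).elim
    · obtain ⟨⟨⟨B, u⟩, hB⟩, r⟩ := r
      obtain ⟨⟨⟨B', u'⟩, hB'⟩, s⟩ := s
      have nr := nn r
      have ns := nn s
      simp only at hB hB'
      simp only [F2, g] at h1 h2
      -- the two rows agree in their inflating part and in their extra symbol and row of `A`
      have key : AN r.1 i = AN s.1 i ∧ AN r.1 j = AN s.1 j ∧ B = B' := by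
        rcases e1 : AN r.1 i with _ | x <;> rcases e2 : AN r.1 j with _ | y <;>
        rcases e3 : AN s.1 i with _ | z <;> rcases e4 : AN s.1 j with _ | w <;>
          simp only [e1, e2, e3, e4, Option.elim, reduceCtorEq, Sum.inl.injEq, Sum.inr.injEq,
            Prod.mk.injEq, and_self, not_true_eq_false] at h1 h2 nr ns
        · refine ⟨rfl, by rw [h2.2], injA (i := some j) (j := none) (by simp) h2.1 ?_⟩
          rw [hB, hB', h1]
        · refine ⟨by rw [h1.2], rfl, injA (i := some i) (j := none) (by simp) h1.1 ?_⟩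
          rw [hB, hB', h2]
        · exact ⟨by rw [h1.2], by rw [h2.2], injA hsij h1.1 h2.1⟩
      obtain ⟨k1, k2, rfl⟩ := key
      have hu : u = u' := hι (hB.symm.trans hB')
      subst hu
      have : r = s := Subtype.ext ((hAN i j hij).1 (Prod.ext k1 k2))
      subst this
      rfl
    · exact (c23 _ _ h1 h2).elim
    · simp [F1, F3] at h1
    · exact (c23 _ _ h1.symm h2.symm).elim
    · simp only [F3, Sum.inr.injEq] at h1 h2
      have : r = s := (hAU i j hij).1 (Prod.ext h1 h2)
      rw [this]
  · have sN : ∀ a b : Option M, ¬ (a = none ∧ b = none) →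
        ∃ r : {r : RN // r ≠ r₀}, AN r.1 i = a ∧ AN r.1 j = b := by
      intro a b hab
      obtain ⟨r, hr⟩ := (hAN i j hij).2 (a, b)
      simp only [Prod.mk.injEq] at hr
      refine ⟨⟨r, ?_⟩, hr⟩
      rintro rfl
      exact hab ⟨hr.1.symm.trans (hr₀ i), hr.2.symm.trans (hr₀ j)⟩
    rintro ⟨⟨b, x⟩ | u, ⟨b', x'⟩ | u'⟩
    · obtain ⟨B, hB⟩ := (hA _ _ hsij).2 (b, b')
      simp only [Prod.mk.injEq] at hB
      by_cases hu : A B none ∈ Set.range ι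
      · obtain ⟨u, hu⟩ := hu
        obtain ⟨r, h1, h2⟩ := sN (some x) (some x') (by simp)
        exact ⟨Sum.inl (Sum.inr (⟨(B, u), hu.symm⟩, r)), by simp [F2, g, h1, h2, hB]⟩
      · obtain ⟨r, hr⟩ := (hAM i j hij).2 (x, x')
        simp only [Prod.mk.injEq] at hr
        exact ⟨Sum.inl (Sum.inl (⟨B, hu⟩, r)), by simp [F1, hr, hB]⟩
    · obtain ⟨B, hB⟩ := (hA (some i) none (by simp)).2 (b, ι u')
      simp only [Prod.mk.injEq] at hB
      obtain ⟨r, h1, h2⟩ := sN (some x) none (by simp)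
      exact ⟨Sum.inl (Sum.inr (⟨(B, u'), hB.2⟩, r)), by simp [F2, g, h1, h2, hB]⟩
    · obtain ⟨B, hB⟩ := (hA (some j) none (by simp)).2 (b', ι u)
      simp only [Prod.mk.injEq] at hB
      obtain ⟨r, h1, h2⟩ := sN none (some x') (by simp)
      exact ⟨Sum.inl (Sum.inr (⟨(B, u), hB.2⟩, r)), by simp [F2, g, h1, h2, hB]⟩
    · obtain ⟨r, hr⟩ := (hAU i j hij).2 (u, u')
      simp only [Prod.mk.injEq] at hr
      exact ⟨Sum.inr r, by simp [F3, hr]⟩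

/-! ### Orthogonal arrays of every large order -/

/-- The Chowla–Erdős–Straus theorem in qualitative form: for all large `n` there is an array with
`k` columns on `n` symbols. Write `n = (M - 1) t + u` with `0 ≤ u ≤ t`, where `M` is divisible by
high powers of all small primes and `t ≡ B (mod M)` for the product `B` of high powers of the small
primes not dividing `n`. Then `u ≡ n + t (mod M)` has no small prime factor, and `M - 1`, `M`, `t`,
`u` all satisfy MacNeish's condition. -/
theorem exists_hasOA (k : ℕ) (hk : 3 ≤ k) :
    ∃ N : ℕ, ∀ n, N < n → HasOA (Fin k) (Fin n) := by
  set K := k + 1 with hK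
  have hP : 2 ≤ K.factorial := by
    calc 2 = Nat.factorial 2 := rfl
      _ ≤ _ := Nat.factorial_le (by omega)
  obtain ⟨M, hM⟩ : ∃ M, M = K.factorial ^ K := ⟨_, rfl⟩
  have hM2 : 3 ≤ M := by
    have : 2 ^ K ≤ M := hM ▸ Nat.pow_le_pow_left hP K
    have h4 : 2 ^ 2 ≤ 2 ^ K := Nat.pow_le_pow_right (by norm_num) (by omega)
    omega
  have hpM : ∀ p, p.Prime → p ≤ K → p ^ K ∣ M := fun p hp h =>
    hM ▸ pow_dvd_pow_of_dvd (Nat.dvd_factorial hp.pos h) K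
  have hpM1 : ∀ p, p.Prime → p ≤ K → p ∣ M := fun p hp h =>
    (dvd_pow_self p (by omega)).trans (hpM p hp h)
  have hk01 : (⟨0, by omega⟩ : Fin k) ≠ ⟨1, by omega⟩ := by simp
  refine ⟨(M - 1) * (M * M + M), fun n hn => ?_⟩
  obtain ⟨B, hB⟩ : ∃ B, B = ∏ p ∈ (Finset.range (K + 1)).filter (fun p => p.Prime ∧ ¬ p ∣ n),
    p ^ K := ⟨_, rfl⟩
  have hB1 : ∀ p, p.Prime → p ≤ K → ¬ p ∣ n → p ^ K ∣ B := by
    intro p hp hpK hpn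
    rw [hB]
    exact Finset.dvd_prod_of_mem (fun p => p ^ K) (by simp [hp, hpn]; omega)
  have hB2 : ∀ p, p.Prime → p ∣ n → ¬ p ∣ B := by
    intro p hp hpn hpB
    rw [hB, hp.prime.dvd_finsetProd_iff] at hpB
    obtain ⟨q, hq, hpq⟩ := hpB
    simp only [Finset.mem_filter] at hq
    have := (Nat.prime_dvd_prime_iff_eq hp hq.2.1).1 (hp.dvd_of_dvd_pow hpq)
    exact hq.2.2 (this ▸ hpn)
  obtain ⟨m, rfl⟩ : ∃ m, M = m + 1 := ⟨M - 1, by omega⟩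
  simp only [Nat.add_sub_cancel] at hn
  set q := n / m with hq
  have hq1 : m * q ≤ n := Nat.mul_div_le n m
  have hq2 : n < m * (q + 1) := Nat.lt_mul_div_succ n (by omega)
  have hq3 : (m + 1) * (m + 1) + (m + 1) ≤ q := by
    rw [hq, Nat.le_div_iff_mul_le (by omega)]
    nlinarith
  -- the largest `t ≤ q` congruent to `B` modulo `m + 1`
  obtain ⟨t, htq, hqt, htB⟩ : ∃ t, t ≤ q ∧ q < t + (m + 1) ∧ t ≡ B [MOD (m + 1)] := by
    have hlt : (q + m * B) % (m + 1) < m + 1 := Nat.mod_lt _ (by omega)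
    have h2 := Nat.mod_modEq (q + m * B) (m + 1)
    set r := (q + m * B) % (m + 1)
    have hrq : r ≤ q := by nlinarith
    refine ⟨q - r, by omega, by omega, ?_⟩
    rw [← Int.natCast_modEq_iff] at h2 ⊢
    rw [Int.modEq_iff_dvd] at h2 ⊢
    have h3 : (B : ℤ) - (q - r : ℕ) = ((m + 1 : ℕ) : ℤ) * B - (((q + m * B : ℕ) : ℤ) - r) := by
      push_cast [Nat.cast_sub hrq]
      ring
    rw [h3]
    exact dvd_sub (dvd_mul_right _ _) h2
  obtain ⟨u, hu⟩ : ∃ u, n = m * t + u := Nat.exists_eq_add_of_le (by nlinarith)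
  have hut : u ≤ t := by nlinarith
  have hnt : ∀ p, p ∣ m + 1 → (p ∣ u ↔ p ∣ n + B) := by
    intro p hp
    have h1 : p ∣ n + t ↔ p ∣ u := by
      have : n + t = (m + 1) * t + u := by rw [hu]; ring
      rw [this]
      exact Nat.dvd_add_right (hp.mul_right t)
    rw [← h1]
    exact ((Nat.ModEq.add_left n (htB.of_dvd hp)).dvd_iff dvd_rfl)
  have ht0 : 0 < t := by nlinarith
  -- no prime up to `K` divides `u`
  have hup : ∀ p, p.Prime → p ≤ K → ¬ p ∣ u := by
    intro p hp hpK hpu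
    rw [hnt p (hpM1 p hp hpK)] at hpu
    by_cases hpn : p ∣ n
    · exact hB2 p hp hpn ((Nat.dvd_add_right hpn).1 hpu)
    · exact hpn ((Nat.dvd_add_left ((dvd_pow_self p (by omega)).trans
        (hB1 p hp hpK hpn))).1 hpu)
  have hu0 : 0 < u := by
    rcases Nat.eq_zero_or_pos u with h | h
    · exact absurd (h ▸ dvd_zero 2) (hup 2 Nat.prime_two (by omega))
    · exact h
  have hT : HasOA (Fin K) (Fin t) := by
    refine hasOA_of_dvd K t ht0 fun p hp hpt => ?_
    by_cases hpK : p ≤ K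
    · right
      by_cases hpn : p ∣ n
      · exact absurd (((htB.of_dvd (hpM1 p hp hpK)).dvd_iff dvd_rfl).1 hpt) (hB2 p hp hpn)
      · exact ((htB.of_dvd (hpM p hp hpK)).dvd_iff dvd_rfl).2 (hB1 p hp hpK hpn)
    · left; omega
  have hU : HasOA (Fin K) (Fin u) := by
    refine hasOA_of_dvd K u hu0 fun p hp hpu => Or.inl ?_
    by_contra h
    exact hup p hp (by omega) hpu
  have hm : HasOA (Fin K) (Fin m) := by
    refine hasOA_of_dvd K m (by omega) fun p hp hpm => Or.inl ?_
    by_contra h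
    have := (Nat.dvd_add_right hpm).1 (hpM1 p hp (by omega))
    exact hp.one_lt.ne' (Nat.dvd_one.1 this)
  have hm1 : HasOA (Fin K) (Fin (m + 1)) := by
    refine hasOA_of_dvd K (m + 1) (by omega) fun p hp hpm => ?_
    by_cases hpK : p ≤ K
    · exact Or.inr (hpM p hp hpK)
    · left; omega
  have hc : Function.Injective (Fin.castSucc : Fin k → Fin K) := Fin.castSucc_injective k
  have hW := wilson (I := Fin k) (Fin.castLE hut) (Fin.castLE_injective hut) _ _ hk01
    (hT.restrict (finSuccEquiv k).symm (finSuccEquiv k).symm.injective)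
    (hm.restrict _ hc) ((hm1.restrict _ hc).congr (finSuccEquiv m)) (hU.restrict _ hc)
  refine hW.congr (Fintype.equivFinOfCardEq ?_)
  simp [hu, mul_comm]

/-! ### Rings with prescribed order and characteristic -/

/-- A commutative ring with `q` elements, of characteristic `π`, containing `k` elements with
pairwise unit differences. -/
def HasRing (k q π : ℕ) : Prop :=
  ∃ (G : Type) (_ : CommRing G) (_ : Finite G) (a : Fin k → G),
    Nat.card G = q ∧ addOrderOf (1 : G) = π ∧ ∀ i j, i ≠ j → IsUnit (a i - a j)

/-- The Witt vectors of length `e` over the field with `p ^ (p ^ e)` elements; units are detected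
by the zeroth coefficient, so it suffices to pick elements with distinct zeroth coefficients. -/
theorem hasRing_prime_pow (k p e : ℕ) (hp : p.Prime) (he : 0 < e) (hk : k < p ^ e) :
    HasRing k ((p ^ e) ^ (p ^ e)) (p ^ e) := by
  have : Fact p.Prime := ⟨hp⟩
  set f := p ^ e with hf
  have hf0 : f ≠ 0 := by omega
  let F := GaloisField p f
  let : Fintype F := Fintype.ofFinite F
  have hc : Nat.card F = p ^ f := GaloisField.card p f hf0
  have hkf : k ≤ p ^ f := hk.le.trans (Nat.lt_pow_self hp.one_lt).le
  let φ : F ≃ Fin (p ^ f) := Finite.equivFinOfCardEq hc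
  let b : Fin k → F := fun i => φ.symm (Fin.castLE hkf i)
  have hb : Function.Injective b := φ.symm.injective.comp (Fin.castLE_injective hkf)
  refine ⟨TruncatedWittVector p e F, inferInstance, inferInstance,
    fun i => WittVector.truncate e (WittVector.teichmuller p (b i)), ?_, ?_, ?_⟩
  · rw [Nat.card_eq_fintype_card, TruncatedWittVector.card, ← Nat.card_eq_fintype_card, hc,
      ← pow_mul, mul_comm f e, pow_mul]
  · obtain ⟨d, rfl⟩ : ∃ d, e = d + 1 := ⟨e - 1, by omega⟩
    have key : ∀ j, (p ^ j) • (1 : TruncatedWittVector p (d + 1) F) =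
        WittVector.truncate (d + 1) ((p : WittVector p F) ^ j) := by
      intro j
      rw [map_pow, map_natCast, nsmul_one, Nat.cast_pow]
    apply addOrderOf_eq_prime_pow
    · intro h
      rw [key] at h
      have h2 := WittVector.coeff_truncate ((p : WittVector p F) ^ d) (Fin.last d)
      rw [h, Fin.val_last, WittVector.coeff_p_pow, TruncatedWittVector.coeff_zero] at h2
      exact zero_ne_one h2
    · rw [key]
      ext i
      rw [WittVector.coeff_truncate, WittVector.coeff_p_pow_eq_zero p F (by omega),
        TruncatedWittVector.coeff_zero]
  · intro i j hij
    rw [← map_sub]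
    apply IsUnit.map
    apply WittVector.isUnit_of_coeff_zero_ne_zero
    have : (WittVector.teichmuller p (b i) - WittVector.teichmuller p (b j)).coeff 0
        = b i - b j := by
      have := map_sub (WittVector.constantCoeff (p := p) (R := F))
        (WittVector.teichmuller p (b i)) (WittVector.teichmuller p (b j))
      simpa [WittVector.constantCoeff] using this
    rw [this]
    exact sub_ne_zero.2 (hb.ne hij)

theorem HasRing.mul {k q π q' π' : ℕ} (h : HasRing k q π) (h' : HasRing k q' π')
    (hc : π.Coprime π') : HasRing k (q * q') (π * π') := by
  obtain ⟨G, _, _, a, h1, h2, h3⟩ := h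
  obtain ⟨G', _, _, a', h1', h2', h3'⟩ := h'
  refine ⟨G × G', inferInstance, inferInstance, fun i => (a i, a' i), ?_, ?_, ?_⟩
  · rw [Nat.card_prod, h1, h1']
  · rw [Prod.addOrderOf, Prod.fst_one, Prod.snd_one, h2, h2', hc.lcm_eq_mul]
  · intro i j hij
    rw [Prod.mk_sub_mk, Prod.isUnit_iff]
    exact ⟨h3 i j hij, h3' i j hij⟩

theorem hasRing_prod (k : ℕ) (m : ℕ → ℕ) (S : Finset ℕ)
    (h : ∀ p ∈ S, p.Prime ∧ k < m p ∧ ∃ e : ℕ, 0 < e ∧ m p = p ^ e) :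
    HasRing k (∏ p ∈ S, m p ^ m p) (∏ p ∈ S, m p) := by
  induction S using Finset.induction_on with
  | empty =>
    refine ⟨PUnit, inferInstance, inferInstance, fun _ => 0, by simp, by simp, fun i j _ => ?_⟩
    exact isUnit_of_subsingleton _
  | insert p S hpS ih =>
    rw [Finset.prod_insert hpS, Finset.prod_insert hpS]
    obtain ⟨hp, hk, e, he, hm⟩ := h p (Finset.mem_insert_self p S)
    refine HasRing.mul ?_ (ih fun q hq => h q (Finset.mem_insert_of_mem hq)) ?_
    · rw [hm] at hk ⊢
      exact hasRing_prime_pow k p e hp he hk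
    · refine Nat.Coprime.prod_right fun q hq => ?_
      obtain ⟨hq', -, e', -, hm'⟩ := h q (Finset.mem_insert_of_mem hq)
      rw [hm, hm']
      refine Nat.Coprime.pow _ _ ((Nat.coprime_primes hp hq').2 ?_)
      rintro rfl
      exact hpS hq

/-! ### Nets with a semiregular cyclic group -/

/-- The net whose `i`-th parallel class consists of the fibres of `F i`, together with a
permutation `g` of its points that acts on the fibres of every `F i` through a permutation `τ` of
the labels whose nontrivial powers have no fixed points. -/
theorem exists_net {D X : Type} [Fintype D] [DecidableEq D] [Fintype X] [DecidableEq X]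
    (k n : ℕ) (hk : 2 ≤ k) (hn : 2 ≤ n) (hX : Fintype.card X = n) (F : Fin k → D → X)
    (hF : ∀ i j, i ≠ j → Function.Bijective (fun d => (F i d, F j d)))
    (g : Equiv.Perm D) (τ : Equiv.Perm X) (hg : ∀ i d, F i (g d) = τ (F i d))
    (hτ : ∀ j : ℕ, g ^ j ≠ 1 → ∀ x, (τ ^ j) x ≠ x) :
    ∃ Nt : Net D k n,
      (∀ L, L ∈ Nt.lines ↔ L.image g ∈ Nt.lines) ∧
      (∀ c ∈ Nt.classes, ∀ L ∈ c, L.image g ∈ c) ∧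
      (∀ i : ℕ, g ^ i ≠ 1 → ∀ x, (g ^ i) x ≠ x) ∧
      (∀ i : ℕ, g ^ i ≠ 1 → ∀ L ∈ Nt.lines, L.image (g ^ i) ≠ L) := by
  let ℓ : Fin k × X → Finset D := fun q => Finset.univ.filter fun d => F q.1 d = q.2
  have mem : ∀ i x d, d ∈ ℓ (i, x) ↔ F i d = x := fun i x d => by simp [ℓ]
  have other : ∀ i : Fin k, ∃ j, i ≠ j := by
    intro i
    have : Nontrivial (Fin k) := Fin.nontrivial_iff_two_le.2 hk
    obtain ⟨j, hj⟩ := exists_ne i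
    exact ⟨j, hj.symm⟩
  have card : ∀ q, (ℓ q).card = n := by
    rintro ⟨i, x⟩
    obtain ⟨j, hij⟩ := other i
    rw [← hX, ← Finset.card_univ]
    refine Finset.card_bij (fun d _ => F j d) (fun _ _ => Finset.mem_univ _) ?_ ?_
    · intro d hd d' hd' h
      rw [mem] at hd hd'
      exact (hF i j hij).1 (Prod.ext (hd.trans hd'.symm) h)
    · intro y _
      obtain ⟨d, hd⟩ := (hF i j hij).2 (x, y)
      simp only [Prod.mk.injEq] at hd
      exact ⟨d, (mem _ _ _).2 hd.1, hd.2⟩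
  have meet : ∀ q q', q ≠ q' → (ℓ q ∩ ℓ q').card ≤ 1 := by
    rintro ⟨i, x⟩ ⟨j, y⟩ hne
    rw [Finset.card_le_one]
    intro d hd d' hd'
    rw [Finset.mem_inter, mem, mem] at hd hd'
    by_cases hij : i = j
    · subst hij
      exact absurd (by rw [← hd.1, ← hd.2]) hne
    · exact (hF i j hij).1 (Prod.ext (hd.1.trans hd'.1.symm) (hd.2.trans hd'.2.symm))
  -- two labels of the same line agree, as a line has at least two points
  have inj : Function.Injective ℓ := by
    intro q q' h
    by_contra hne
    have := meet q q' hne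
    rw [← h, Finset.inter_self, card] at this
    omega
  let cl : Fin k → Finset (Finset D) := fun i => Finset.univ.image fun x => ℓ (i, x)
  have memcl : ∀ i L, L ∈ cl i ↔ ∃ x, ℓ (i, x) = L := fun i L => by simp [cl]
  have clinj : Function.Injective cl := by
    intro i j h
    have : Nonempty X := Fintype.card_pos_iff.1 (by omega)
    obtain ⟨x⟩ := this
    have h1 : ℓ (i, x) ∈ cl j := h ▸ (memcl _ _).2 ⟨x, rfl⟩
    obtain ⟨y, hy⟩ := (memcl _ _).1 h1
    exact (congrArg Prod.fst (inj hy)).symm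
  have img : ∀ i x, (ℓ (i, x)).image g = ℓ (i, τ x) := by
    intro i x
    ext d
    rw [Finset.mem_image, mem]
    constructor
    · rintro ⟨d', hd', rfl⟩
      rw [hg, (mem _ _ _).1 hd']
    · intro hd
      refine ⟨g.symm d, ?_, by simp⟩
      rw [mem]
      apply τ.injective
      rw [← hg, Equiv.apply_symm_apply, hd]
  have powF : ∀ (j : ℕ) i d, F i ((g ^ j) d) = (τ ^ j) (F i d) := by
    intro j i d
    induction j with
    | zero => simp
    | succ j ih => rw [pow_succ', pow_succ', Equiv.Perm.mul_apply, Equiv.Perm.mul_apply, hg, ih]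
  let Nt : Net D k n :=
    { lines := Finset.univ.image ℓ
      classes := Finset.univ.image cl
      lines_card := by
        rw [Finset.card_image_of_injective _ inj, Finset.card_univ, Fintype.card_prod, hX,
          Fintype.card_fin]
      line_size := by
        intro L hL
        obtain ⟨q, -, rfl⟩ := Finset.mem_image.1 hL
        exact card q
      lines_meet := by
        intro L hL L' hL' hne
        obtain ⟨q, -, rfl⟩ := Finset.mem_image.1 hL
        obtain ⟨q', -, rfl⟩ := Finset.mem_image.1 hL'
        exact meet q q' fun h => hne (by rw [h])
      classes_card := by
        rw [Finset.card_image_of_injective _ clinj, Finset.card_univ, Fintype.card_fin]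
      class_mem := by
        intro c hc L hL
        obtain ⟨i, -, rfl⟩ := Finset.mem_image.1 hc
        obtain ⟨x, rfl⟩ := (memcl _ _).1 hL
        exact Finset.mem_image_of_mem _ (Finset.mem_univ _)
      line_class := by
        intro L hL
        obtain ⟨⟨i, x⟩, -, rfl⟩ := Finset.mem_image.1 hL
        refine ⟨cl i, ⟨Finset.mem_image_of_mem _ (Finset.mem_univ _), (memcl _ _).2 ⟨x, rfl⟩⟩, ?_⟩
        rintro c ⟨hc, hL'⟩
        obtain ⟨j, -, rfl⟩ := Finset.mem_image.1 hc
        obtain ⟨y, hy⟩ := (memcl _ _).1 hL'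
        rw [show j = i from congrArg Prod.fst (inj hy)]
      class_partition := by
        intro c hc d
        obtain ⟨i, -, rfl⟩ := Finset.mem_image.1 hc
        refine ⟨ℓ (i, F i d), ⟨(memcl _ _).2 ⟨_, rfl⟩, (mem _ _ _).2 rfl⟩, ?_⟩
        rintro L ⟨hL, hd⟩
        obtain ⟨x, rfl⟩ := (memcl _ _).1 hL
        rw [(mem _ _ _).1 hd] }
  refine ⟨Nt, ?_, ?_, ?_, ?_⟩
  · intro L
    change L ∈ Finset.univ.image ℓ ↔ L.image g ∈ Finset.univ.image ℓ
    constructor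
    · intro hL
      obtain ⟨⟨i, x⟩, -, rfl⟩ := Finset.mem_image.1 hL
      rw [img]
      exact Finset.mem_image_of_mem _ (Finset.mem_univ _)
    · intro hL
      obtain ⟨⟨i, x⟩, -, hx⟩ := Finset.mem_image.1 hL
      have : L = ℓ (i, τ.symm x) := by
        apply Finset.image_injective g.injective
        rw [img, Equiv.apply_symm_apply, hx]
      rw [this]
      exact Finset.mem_image_of_mem _ (Finset.mem_univ _)
  · intro c hc L hL
    obtain ⟨i, -, rfl⟩ := Finset.mem_image.1 hc
    obtain ⟨x, rfl⟩ := (memcl _ _).1 hL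
    exact (memcl _ _).2 ⟨τ x, (img i x).symm⟩
  · intro j hj d hd
    refine hτ j hj (F ⟨0, by omega⟩ d) ?_
    rw [← powF, hd]
  · intro j hj L hL h
    obtain ⟨⟨i, x⟩, -, rfl⟩ := Finset.mem_image.1 hL
    obtain ⟨d, hd⟩ : (ℓ (i, x)).Nonempty := Finset.card_pos.1 (by rw [card]; omega)
    have h1 : (g ^ j) d ∈ ℓ (i, x) := by
      rw [← h]
      exact Finset.mem_image_of_mem _ hd
    rw [mem] at h1 hd
    rw [powF, hd] at h1
    exact hτ j hj x h1

/-- The product of an array on `s` symbols with the translation net of a ring, permuted by the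
translation `(x, y) ↦ (x, y + 1)` of the second factor. -/
theorem exists_net_of_oa (k s q π : ℕ) (hk : 3 ≤ k) (hs : 2 ≤ s) (hq : 0 < q)
    (hA : HasOA (Fin k) (Fin s)) (hR : HasRing k q π) :
    ∃ (Nt : Net (Fin ((s * q) ^ 2)) k (s * q)) (g : Equiv.Perm (Fin ((s * q) ^ 2))),
      (∀ L, L ∈ Nt.lines ↔ L.image g ∈ Nt.lines) ∧
      orderOf g = π ∧
      (∀ c ∈ Nt.classes, ∀ L ∈ c, L.image g ∈ c) ∧
      (∀ i : ℕ, g ^ i ≠ 1 → ∀ x, (g ^ i) x ≠ x) ∧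
      (∀ i : ℕ, g ^ i ≠ 1 → ∀ L ∈ Nt.lines, L.image (g ^ i) ≠ L) := by
  classical
  obtain ⟨R, A, hA⟩ := hA
  obtain ⟨G, _, _, a, hG, hπ, ha⟩ := hR
  let : Fintype G := Fintype.ofFinite G
  have h01 : (⟨0, by omega⟩ : Fin k) ≠ ⟨1, by omega⟩ := by simp
  let eR := Equiv.ofBijective _ (hA _ _ h01)
  have hcard : Nat.card (R × G × G) = (s * q) ^ 2 := by
    rw [Nat.card_prod, Nat.card_prod, Nat.card_congr eR, Nat.card_prod, hG, Nat.card_fin]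
    ring
  have : Finite R := Finite.of_equiv _ eR.symm
  let φ : R × G × G ≃ Fin ((s * q) ^ 2) := Finite.equivFinOfCardEq hcard
  let F : Fin k → R × G × G → Fin s × G := fun i d => (A d.1 i, d.2.2 + a i * d.2.1)
  have hF : ∀ i j, i ≠ j → Function.Bijective (fun d => (F i d, F j d)) := fun i j hij =>
    (Equiv.prodProdProdComm _ _ _ _).bijective.comp
      ((hA i j hij).prodMap (ring_bijective a ha i j hij))
  let g₀ : Equiv.Perm (R × G × G) :=
    (Equiv.refl R).prodCongr ((Equiv.refl G).prodCongr (Equiv.addRight (1 : G)))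
  let τ : Equiv.Perm (Fin s × G) := (Equiv.refl _).prodCongr (Equiv.addRight (1 : G))
  have hg₀ : ∀ (j : ℕ) d, (g₀ ^ j) d = (d.1, d.2.1, d.2.2 + j) := by
    intro j d
    induction j with
    | zero => simp
    | succ j ih =>
      rw [pow_succ', Equiv.Perm.mul_apply, ih]
      simp [g₀, add_assoc]
  have hτ : ∀ (j : ℕ) x, (τ ^ j) x = (x.1, x.2 + j) := by
    intro j d
    induction j with
    | zero => simp
    | succ j ih =>
      rw [pow_succ', Equiv.Perm.mul_apply, ih]
      simp [τ, add_assoc]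
  obtain ⟨r₀, -⟩ := (hA _ _ h01).2 (⟨0, by omega⟩, ⟨0, by omega⟩)
  let g : Equiv.Perm (Fin ((s * q) ^ 2)) := φ.permCongrHom g₀
  have hg : ∀ j : ℕ, g ^ j = 1 ↔ (j : G) = 0 := by
    intro j
    rw [← map_pow, EmbeddingLike.map_eq_one_iff]
    constructor
    · intro h
      have := hg₀ j (r₀, 0, 0)
      rw [h] at this
      simpa [eq_comm] using this
    · intro h
      ext1 d
      rw [hg₀, h]
      simp
  have hord : orderOf g = π := by
    rw [← hπ]
    apply Nat.dvd_antisymm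
    · rw [orderOf_dvd_iff_pow_eq_one, hg]
      have := addOrderOf_nsmul_eq_zero (1 : G)
      simpa using this
    · rw [addOrderOf_dvd_iff_nsmul_eq_zero]
      have := (hg _).1 (pow_orderOf_eq_one g)
      simpa using this
  have hsq : 2 ≤ s * q := by nlinarith
  obtain ⟨Nt, h1, h2, h3, h4⟩ := exists_net (D := Fin ((s * q) ^ 2)) k (s * q) (by omega) hsq
    (by rw [Fintype.card_prod, Fintype.card_fin, ← Nat.card_eq_fintype_card (α := G), hG])
    (fun i d => F i (φ.symm d)) (fun i j hij => (hF i j hij).comp φ.symm.bijective) g τ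
    (by
      intro i d
      simp [g, g₀, τ, F]
      ring)
    (by
      intro j hj x hx
      rw [hτ] at hx
      exact hj ((hg j).2 (by simpa using congrArg Prod.snd hx)))
  exact ⟨Nt, g, h1, hord, h2, h3, h4⟩

/-- Let `k ≥ 3` with distinct prime factors `p₁, …, p_r`, and for each `i` let
`m_i > k` be a power of `p_i`; set `π = m₁ ⋯ m_r` (so `k ∣ π`). Then there is
`N` (depending only on `k`) such that for every `s > N` there is a
`(k, s·m₁^{m₁} ⋯ m_r^{m_r})`-net having a cyclic automorphism group of order
`π` that is semiregular on points and on lines and leaves each parallel class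
invariant. -/
theorem statement12 (k : ℕ) (hk : 3 ≤ k) :
    ∃ N : ℕ, ∀ m : ℕ → ℕ,
      (∀ p ∈ k.primeFactors, k < m p ∧ ∃ e : ℕ, m p = p ^ e) →
      ∀ s : ℕ, N < s →
        ∃ (Nt : Net (Fin ((s * ∏ p ∈ k.primeFactors, (m p) ^ (m p)) ^ 2)) k
            (s * ∏ p ∈ k.primeFactors, (m p) ^ (m p)))
          (g : Equiv.Perm (Fin ((s * ∏ p ∈ k.primeFactors, (m p) ^ (m p)) ^ 2))),
          (∀ L, L ∈ Nt.lines ↔ L.image g ∈ Nt.lines) ∧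
          orderOf g = (∏ p ∈ k.primeFactors, m p) ∧
          (∀ c ∈ Nt.classes, ∀ L ∈ c, L.image g ∈ c) ∧
          (∀ i : ℕ, g ^ i ≠ 1 → ∀ x, (g ^ i) x ≠ x) ∧
          (∀ i : ℕ, g ^ i ≠ 1 → ∀ L ∈ Nt.lines, L.image (g ^ i) ≠ L) := by
  obtain ⟨N, hN⟩ := exists_hasOA k hk
  refine ⟨max N 1, fun m hm s hs => ?_⟩
  have hm' : ∀ p ∈ k.primeFactors, p.Prime ∧ k < m p ∧ ∃ e : ℕ, 0 < e ∧ m p = p ^ e := by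
    intro p hp
    obtain ⟨h1, e, he⟩ := hm p hp
    refine ⟨Nat.prime_of_mem_primeFactors hp, h1, e, Nat.pos_of_ne_zero ?_, he⟩
    rintro rfl
    rw [pow_zero] at he
    omega
  have hq : 0 < ∏ p ∈ k.primeFactors, m p ^ m p := by
    refine Finset.prod_pos fun p hp => pow_pos ?_ _
    have := (hm p hp).1
    omega
  exact exists_net_of_oa k s _ _ hk (by omega) hq (hN s (by omega))
    (hasRing_prod k m k.primeFactors hm')
end

section
/- Let k ≥ 3 be an integer, let S̄ be a set of positive integers such that for every u ∈ S̄ there exists a 2-(u,k,1)-design, and let w ∈ S̄. Suppose there is an integer N ≥ k such that x + w(y − x) ∈ S̄ whenever x and y are integers with x > N, y > xk, x − 1 ≡ y − 1 ≡ 0 (mod k − 1), x(x − 1) ≡ y(y − 1) ≡ 0 (mod k(k − 1)), and y − x > N. Then there exists an integer U such that S̄ contains every integer u > U satisfying u − 1 ≡ 0 (mod k − 1) and u(u − 1) ≡ 0 (mod k(k − 1)). -/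
/-- Admissibility transfers between integers congruent modulo `k * (k - 1)`. The first integer is
written `a + 1` and the second `a + 1 + k * (k - 1) * s`, so that subtracting `1`
from either does not truncate. -/
theorem admissible_shift_iff (k a s : ℕ) :
    ((k - 1 ∣ a + 1 + k * (k - 1) * s - 1) ↔ k - 1 ∣ a + 1 - 1) ∧
    ((k * (k - 1) ∣ (a + 1 + k * (k - 1) * s) * (a + 1 + k * (k - 1) * s - 1)) ↔
      k * (k - 1) ∣ (a + 1) * (a + 1 - 1)) := by
  generalize k - 1 = j
  have e : a + 1 + k * j * s - 1 = a + k * j * s := by omega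
  rw [e, Nat.add_sub_cancel]
  constructor
  · exact (Nat.dvd_add_iff_left ⟨k * s, by ring⟩).symm
  · have e2 : (a + 1 + k * j * s) * (a + k * j * s) =
        (a + 1) * a + k * j * (s * (2 * a + 1 + k * j * s)) := by ring
    rw [e2]
    exact (Nat.dvd_add_iff_left (Dvd.intro _ rfl)).symm

/-- Let `k ≥ 3`, let `S` be a set of positive integers `u` each admitting a
`2`-`(u,k,1)` design, and let `w ∈ S`. Suppose there is `N ≥ k` such that
`x + w(y-x) ∈ S` whenever `x > N`, `y > xk`, `y - x > N`, and `x, y` satisfy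
the divisibility conditions. Then `S` contains every sufficiently large `u`
satisfying the divisibility conditions. -/
theorem statement15 (k : ℕ) (hk : 3 ≤ k) (S : Set ℕ)
    (hS : ∀ u ∈ S, 0 < u ∧ Nonempty (Design (Fin u) k))
    (w : ℕ) (hw : w ∈ S) (N : ℕ) (hN : k ≤ N)
    (hclosed : ∀ x y : ℕ, N < x → x * k < y →
      (k - 1) ∣ (x - 1) → (k - 1) ∣ (y - 1) →
      (k * (k - 1)) ∣ (x * (x - 1)) → (k * (k - 1)) ∣ (y * (y - 1)) →
      N < y - x → x + w * (y - x) ∈ S) :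
    ∃ U : ℕ, ∀ u : ℕ, U < u → (k - 1) ∣ (u - 1) →
      (k * (k - 1)) ∣ (u * (u - 1)) → u ∈ S := by
  have hw0 : 0 < w := (hS w hw).1
  have hM : 0 < k * (k - 1) := Nat.mul_pos (by omega) (by omega)
  have hm : 0 < k * (k - 1) * w := Nat.mul_pos hM hw0
  -- The bound forces the quotient `t` below to be at least `(N + 1 + k * (k - 1) * w) * k`.
  refine ⟨N + 1 + k * (k - 1) * w * ((N + 1 + k * (k - 1) * w) * k), ?_⟩
  intro u hu h1 h2
  obtain ⟨a, ha, ham, t, hut⟩ : ∃ a, N ≤ a ∧ a < N + k * (k - 1) * w ∧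
      ∃ t, u = a + 1 + k * (k - 1) * w * t := by
    refine ⟨N + (u - (N + 1)) % (k * (k - 1) * w), by omega,
      Nat.add_lt_add_left (Nat.mod_lt _ hm) N, (u - (N + 1)) / (k * (k - 1) * w), ?_⟩
    have := Nat.mod_add_div (u - (N + 1)) (k * (k - 1) * w)
    omega
  have ht : (N + 1 + k * (k - 1) * w) * k ≤ t := by
    by_contra! hlt
    have := Nat.mul_le_mul_left (k * (k - 1) * w) (Nat.succ_le_of_lt hlt)
    rw [Nat.mul_succ] at this
    omega
  have hxt : (a + 1) * k < t :=
    lt_of_lt_of_le (Nat.mul_lt_mul_of_pos_right (by omega) (by omega)) ht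
  have hNt : N < t := lt_of_le_of_lt (by nlinarith) hxt
  have hd : t ≤ k * (k - 1) * t := Nat.le_mul_of_pos_left t hM
  rw [mul_assoc] at hut
  subst hut
  obtain ⟨hA1, hA2⟩ := admissible_shift_iff k a (w * t)
  obtain ⟨hB1, hB2⟩ := admissible_shift_iff k a t
  have hx1 := hA1.1 h1
  have hx2 := hA2.1 h2
  have hmem := hclosed (a + 1) (a + 1 + k * (k - 1) * t) (by omega) (by omega)
    hx1 (hB1.2 hx1) hx2 (hB2.2 hx2) (by omega)
  rw [Nat.add_sub_cancel_left, Nat.mul_left_comm] at hmem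
  exact hmem
end

section
/- Let k ≥ 3 and let G be a 1-blocked group of automorphisms of a 2-(w,k,1)-design W. Suppose there exist a 2-(y,k,1)-design Y with an x-point subdesign and a transversal design TD(k, y − x). Then there exists a 2-(w(y − x) + x, k, 1)-design U whose automorphism group contains a 1-blocked subgroup isomorphic to G. -/
/-! ### Transversal designs as orthogonal arrays -/

/-- With empty groups there would be at most one group, against `3 ≤ k`. -/
lemma pos_of_transversal {α : Type} [DecidableEq α] {k n : ℕ} (hk : 3 ≤ k)
    (T : TransversalDesign α k n) : 0 < n := by
  rcases Nat.eq_zero_or_pos n with rfl | h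
  · exfalso
    have h1 : T.groups.card ≤ 1 := by
      rw [Finset.card_le_one]
      intro a ha b hb
      rw [Finset.card_eq_zero.1 (T.group_size a ha), Finset.card_eq_zero.1 (T.group_size b hb)]
    have := T.groups_card
    omega
  · exact h

/-- A transversal design `TD(k,n)` yields an orthogonal array of strength `2` and index `1` on any
alphabet `N` of size `n`: number the groups by `Fin k`, identify each group with `N`, and read a
block as the function giving its point in each group. -/
lemma exists_array {α : Type} [DecidableEq α] {k n : ℕ} (T : TransversalDesign α k n)
    (N : Type) [Fintype N] (hN : Fintype.card N = n) :
    ∃ C : Set (Fin k → N), ∀ i j : Fin k, i ≠ j → ∀ a b : N,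
      ∃! c, c ∈ C ∧ c i = a ∧ c j = b := by
  classical
  let gr : Fin k ≃ T.groups := (Fintype.equivFinOfCardEq (by simp [T.groups_card])).symm
  have he : ∀ i : Fin k, Nonempty (N ≃ ((gr i : Finset α) : Finset α)) := fun i =>
    Fintype.card_eq.1 (by
      rw [hN, Fintype.card_coe, T.group_size _ (gr i).2])
  let p : (i : Fin k) → N ≃ ((gr i : Finset α) : Finset α) := fun i => (he i).some
  refine ⟨{c | ∃ B ∈ T.blocks, ∀ i, ((p i (c i) : α)) ∈ B}, ?_⟩
  have key : ∀ B ∈ T.blocks, ∀ i, ∀ a b : N, (p i a : α) ∈ B → (p i b : α) ∈ B → a = b := by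
    intro B hB i a b ha hb
    have h1 := T.block_meets B hB _ (gr i).2
    have := Finset.card_le_one.1 h1.le (p i a) (Finset.mem_inter.2 ⟨ha, (p i a).2⟩)
      (p i b) (Finset.mem_inter.2 ⟨hb, (p i b).2⟩)
    exact (p i).injective (Subtype.ext this)
  have ex : ∀ B ∈ T.blocks, ∀ i, ∃ a : N, (p i a : α) ∈ B := by
    intro B hB i
    have h1 := T.block_meets B hB _ (gr i).2
    obtain ⟨x, hx⟩ := Finset.card_pos.1 (h1 ▸ Nat.one_pos)
    rw [Finset.mem_inter] at hx
    exact ⟨(p i).symm ⟨x, hx.2⟩, by simpa using hx.1⟩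
  intro i j hij a b
  have hd : ∀ H ∈ T.groups, ¬((p i a : α) ∈ H ∧ (p j b : α) ∈ H) := by
    rintro H hH ⟨h1, h2⟩
    have e1 := (T.groups_partition (p i a)).unique ⟨hH, h1⟩ ⟨(gr i).2, (p i a).2⟩
    have e2 := (T.groups_partition (p j b)).unique ⟨hH, h2⟩ ⟨(gr j).2, (p j b).2⟩
    exact hij (gr.injective (Subtype.ext (e1.symm.trans e2)))
  obtain ⟨B, ⟨hB, hBa, hBb⟩, hu⟩ := T.pair_cover _ _ hd
  choose c hc using ex B hB
  refine ⟨c, ⟨⟨B, hB, hc⟩, key B hB i _ _ (hc i) hBa, key B hB j _ _ (hc j) hBb⟩, ?_⟩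
  rintro c' ⟨⟨B', hB', hc'⟩, rfl, rfl⟩
  have : B' = B := hu B' ⟨hB', hc' i, hc' j⟩
  subst this
  funext l
  exact key B' hB' l _ _ (hc' l) (hc l)

/-! ### Equivariant labelling of the blocks -/

/-- The points of the blocks of a design with a `1`-blocked group can be labelled by `Fin k`,
injectively on each block and invariantly under the group. -/
lemma exists_labelling {k w : ℕ} (hk : 0 < k) (W : Design (Fin w) k) (G : Subgroup (Equiv.Perm (Fin w)))
    (hauto : ∀ g ∈ G, IsAuto W g)
    (hblocked : ∀ g ∈ G, ∀ B ∈ W.blocks, B.image g = B → ∀ z ∈ B, g z = z) :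
    ∃ l : Finset (Fin w) → Fin w → Fin k, ∀ A ∈ W.blocks,
      Set.InjOn (l A) A ∧ ∀ g ∈ G, ∀ z ∈ A, l (A.image g) (g z) = l A z := by
  classical
  let s : Setoid (Finset (Fin w)) :=
    { r := fun A B => ∃ g ∈ G, A.image g = B
      iseqv :=
        { refl := fun A => ⟨1, G.one_mem, by simp⟩
          symm := by
            rintro A _ ⟨g, hg, rfl⟩
            exact ⟨g⁻¹, G.inv_mem hg, by simp [Finset.image_image, Function.comp_def]⟩
          trans := by
            rintro A _ _ ⟨g, hg, rfl⟩ ⟨h, hh, rfl⟩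
            exact ⟨h * g, G.mul_mem hh hg, by simp [Finset.image_image, Equiv.Perm.coe_mul]⟩ } }
  -- `r A` is the representative of the orbit of `A`, and `γ A` carries `r A` to `A`.
  let r : Finset (Fin w) → Finset (Fin w) := fun A => (Quotient.mk s A).out
  have hr : ∀ A, ∃ g ∈ G, (r A).image g = A := fun A => Quotient.mk_out (s := s) A
  choose γ hγ hγA using hr
  have hrb : ∀ A ∈ W.blocks, r A ∈ W.blocks := fun A hA =>
    (hauto _ (hγ A) (r A)).2 (by rwa [hγA])
  have hrg : ∀ A, ∀ g ∈ G, r (A.image g) = r A := by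
    intro A g hg
    have : Quotient.mk s (A.image g) = Quotient.mk s A :=
      Quotient.sound (s := s) (Setoid.symm' s ⟨g, hg, rfl⟩)
    simp only [r, this]
  have hem : ∀ A ∈ W.blocks, ∃ e : Fin w → Fin k, Set.InjOn e A := by
    intro A hA
    have e := A.equivFinOfCardEq (W.blockSize A hA)
    refine ⟨fun z => if h : z ∈ A then e ⟨z, h⟩ else ⟨0, hk⟩, ?_⟩
    intro z hz z' hz' h
    have hz : z ∈ A := hz
    have hz' : z' ∈ A := hz'
    simp only [hz, hz', dif_pos] at h
    simpa using e.injective h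
  have hem' : ∀ A, ∃ e : Fin w → Fin k, A ∈ W.blocks → Set.InjOn e A := by
    intro A
    by_cases hA : A ∈ W.blocks
    · obtain ⟨e, he⟩ := hem A hA
      exact ⟨e, fun _ => he⟩
    · exact ⟨fun _ => ⟨0, hk⟩, fun h => (hA h).elim⟩
  choose e he using hem'
  have hmem : ∀ A, ∀ z ∈ A, (γ A)⁻¹ z ∈ r A := by
    intro A z hz
    rw [← hγA A] at hz
    obtain ⟨t, ht, rfl⟩ := Finset.mem_image.1 hz
    simpa using ht
  refine ⟨fun A z => e (r A) ((γ A)⁻¹ z), fun A hA => ⟨?_, ?_⟩⟩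
  · intro z hz z' hz' h
    exact (γ A)⁻¹.injective (he _ (hrb A hA) (hmem A z hz) (hmem A z' hz') h)
  · intro g hg z hz
    -- `(γ (g A))⁻¹ * g * γ A` stabilizes `r A`, hence fixes `(γ A)⁻¹ z`.
    have hst : (r A).image ((γ (A.image g))⁻¹ * g * γ A : Equiv.Perm (Fin w)) = r A := by
      have h1 := hγA (A.image g)
      rw [hrg A g hg] at h1
      have h2 : ((r A).image (γ A)).image g = (r A).image (γ (A.image g)) := by
        rw [hγA, h1]
      have h3 := congrArg (Finset.image ((γ (A.image g))⁻¹ : Equiv.Perm (Fin w))) h2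
      simpa [Finset.image_image, Function.comp_def, Equiv.Perm.mul_apply] using h3
    have hfix := hblocked _ (G.mul_mem (G.mul_mem (G.inv_mem (hγ (A.image g))) hg) (hγ A))
      (r A) (hrb A hA) hst _ (hmem A z hz)
    have hcancel : γ A ((γ A)⁻¹ z) = z := by simp
    simp only [Equiv.Perm.mul_apply, hcancel] at hfix
    simp only [hrg A g hg, hfix]

/-- The underlying point of `Y`. -/
def proj {w y : ℕ} {X : Finset (Fin y)} : Pt w X → Fin y
  | .inl u => u.2
  | .inr a => a

/-- Two points lie in a common copy of `Y`, that is, they do not have different `W`-coordinates. -/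
def SameCopy {w y : ℕ} {X : Finset (Fin y)} : Pt w X → Pt w X → Prop
  | .inl u, .inl v => u.1 = v.1
  | _, _ => True

/-- Blocks coming from the copies of `Y`. They are described through the projection to `Y` so that
the blocks inside `X` are present even when `W` has no points. -/
def IsCopyBlock {w y k : ℕ} (Y : Design (Fin y) k) (X : Finset (Fin y))
    (B : Finset (Pt w X)) : Prop :=
  B.image proj ∈ Y.blocks ∧ ∀ p ∈ B, ∀ q ∈ B, SameCopy p q

/-- Blocks coming from the orthogonal array `C`, where `l A` labels the points of the block `A` of
`W` by the coordinates of the array. -/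
def IsArrayBlock {w y k : ℕ} (W : Design (Fin w) k) (X : Finset (Fin y))
    (C : Set (Fin k → {a : Fin y // a ∉ X})) (l : Finset (Fin w) → Fin w → Fin k)
    (B : Finset (Pt w X)) : Prop :=
  ∃ A ∈ W.blocks, ∃ c ∈ C, B = A.image fun z => .inl (z, c (l A z))

section

variable {w y k : ℕ} {X : Finset (Fin y)}

lemma SameCopy.symm {p q : Pt w X} (h : SameCopy p q) : SameCopy q p := by
  rcases p with p | p <;> rcases q with q | q <;> simp_all [SameCopy]

lemma SameCopy.refl (p : Pt w X) : SameCopy p p := by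
  rcases p with p | p <;> simp [SameCopy]

lemma eq_of_proj_eq {p q : Pt w X} (h : SameCopy p q) (hp : proj p = proj q) : p = q := by
  rcases p with ⟨z, a, ha⟩ | ⟨a, ha⟩ <;> rcases q with ⟨z', b, hb⟩ | ⟨b, hb⟩
  · simp_all [SameCopy, proj]
  · exact (ha ((show a = b from hp) ▸ hb)).elim
  · exact (hb ((show a = b from hp) ▸ ha)).elim
  · simp_all [proj]

lemma IsCopyBlock.injOn {Y : Design (Fin y) k} {B : Finset (Pt w X)} (h : IsCopyBlock Y X B) :
    Set.InjOn proj (B : Set (Pt w X)) :=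
  fun p hp q hq hpq => eq_of_proj_eq (h.2 p hp q hq) hpq

lemma IsCopyBlock.card {Y : Design (Fin y) k} {B : Finset (Pt w X)} (h : IsCopyBlock Y X B) :
    B.card = k := by
  rw [← Finset.card_image_of_injOn h.injOn, Y.blockSize _ h.1]

lemma IsArrayBlock.card {W : Design (Fin w) k} {C : Set (Fin k → {a : Fin y // a ∉ X})}
    {l : Finset (Fin w) → Fin w → Fin k} {B : Finset (Pt w X)} (h : IsArrayBlock W X C l B) :
    B.card = k := by
  obtain ⟨A, hA, c, -, rfl⟩ := h
  rw [Finset.card_image_of_injective, W.blockSize A hA]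
  intro z z' h
  simpa using congrArg (Sum.elim Prod.fst fun _ => z') h

/-- Two distinct points in a common copy of `Y` lie in exactly one copy block. -/
lemma existsUnique_copyBlock (Y : Design (Fin y) k) (hsub : IsSubdesign Y X)
    {p q : Pt w X} (hpq : p ≠ q) (hs : SameCopy p q) :
    ∃! B, IsCopyBlock Y X B ∧ p ∈ B ∧ q ∈ B := by
  classical
  have hne : proj p ≠ proj q := fun h => hpq (eq_of_proj_eq hs h)
  obtain ⟨A, ⟨hA, hpA, hqA⟩, hu⟩ := Y.pairCover _ _ hne
  -- If `p` and `q` both lie in `X`, then so does the whole block `A`.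
  have hAX : proj p ∈ X → proj q ∈ X → A ⊆ X := fun h1 h2 => by
    refine hsub A hA ?_
    rw [← Finset.card_pair hne]
    exact Finset.card_le_card (by
      intro t ht
      simp only [Finset.mem_insert, Finset.mem_singleton] at ht
      rcases ht with rfl | rfl <;> simp [*])
  have hsame : ∀ r s : Pt w X, proj r ∈ A → SameCopy r p → SameCopy r q →
      SameCopy s p → SameCopy s q → SameCopy r s := by
    intro r s hr h1 h2 h3 h4
    rcases r with ⟨z, a, ha⟩ | ⟨a, ha⟩
    · rcases s with ⟨z', b, hb⟩ | ⟨b, hb⟩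
      · rcases p with p | p
        · exact h1.trans h3.symm
        · rcases q with q | q
          · exact h2.trans h4.symm
          · exact (ha (hAX p.2 q.2 hr)).elim
      · trivial
    · rcases s with s | s <;> trivial
  let B : Finset (Pt w X) :=
    Finset.univ.filter fun r => proj r ∈ A ∧ SameCopy r p ∧ SameCopy r q
  have hB : ∀ r, r ∈ B ↔ proj r ∈ A ∧ SameCopy r p ∧ SameCopy r q := fun r => by simp [B]
  have himg : B.image proj = A := by
    ext t
    simp only [Finset.mem_image, hB]
    constructor
    · rintro ⟨r, ⟨hr, -⟩, rfl⟩
      exact hr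
    · intro ht
      by_cases htX : t ∈ X
      · refine ⟨.inr ⟨t, htX⟩, ⟨ht, ?_, ?_⟩, rfl⟩
        · rcases p with p | p <;> trivial
        · rcases q with q | q <;> trivial
      · rcases p with p | p
        · refine ⟨.inl (p.1, ⟨t, htX⟩), ⟨ht, rfl, ?_⟩, rfl⟩
          rcases q with q | q
          · exact hs
          · trivial
        · rcases q with q | q
          · exact ⟨.inl (q.1, ⟨t, htX⟩), ⟨ht, trivial, rfl⟩, rfl⟩
          · exact (htX (hAX p.2 q.2 ht)).elim
  have hBc : IsCopyBlock Y X B := by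
    refine ⟨himg ▸ hA, fun r hr s hs' => ?_⟩
    rw [hB] at hr hs'
    exact hsame r s hr.1 hr.2.1 hr.2.2 hs'.2.1 hs'.2.2
  refine ⟨B, ⟨hBc, (hB p).2 ⟨hpA, .refl p, hs⟩, (hB q).2 ⟨hqA, hs.symm, .refl q⟩⟩, ?_⟩
  rintro B' ⟨hB', hp, hq⟩
  have hA' : B'.image proj = A :=
    hu _ ⟨hB'.1, Finset.mem_image_of_mem _ hp, Finset.mem_image_of_mem _ hq⟩
  refine Finset.eq_of_subset_of_card_le (fun r hr => ?_) (by rw [hB'.card, hBc.card])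
  rw [hB]
  exact ⟨hA' ▸ Finset.mem_image_of_mem _ hr, hB'.2 r hr p hp, hB'.2 r hr q hq⟩

/-- An array block meets each copy of `Y` in at most one point. -/
lemma IsArrayBlock.eq_of_sameCopy {W : Design (Fin w) k}
    {C : Set (Fin k → {a : Fin y // a ∉ X})} {l : Finset (Fin w) → Fin w → Fin k}
    {B : Finset (Pt w X)} (h : IsArrayBlock W X C l B) {p q : Pt w X} (hp : p ∈ B) (hq : q ∈ B)
    (hs : SameCopy p q) : p = q := by
  obtain ⟨A, hA, c, -, rfl⟩ := h
  obtain ⟨z, -, rfl⟩ := Finset.mem_image.1 hp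
  obtain ⟨z', -, rfl⟩ := Finset.mem_image.1 hq
  have : z = z' := hs
  rw [this]

/-- Two points in no common copy of `Y` lie in exactly one array block. -/
lemma existsUnique_arrayBlock (W : Design (Fin w) k)
    {C : Set (Fin k → {a : Fin y // a ∉ X})}
    (hC : ∀ i j : Fin k, i ≠ j → ∀ a b, ∃! c, c ∈ C ∧ c i = a ∧ c j = b)
    {l : Finset (Fin w) → Fin w → Fin k} (hl : ∀ A ∈ W.blocks, Set.InjOn (l A) A)
    {p q : Pt w X} (hs : ¬ SameCopy p q) :
    ∃! B, IsArrayBlock W X C l B ∧ p ∈ B ∧ q ∈ B := by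
  rcases p with ⟨z, a⟩ | p
  swap
  · rcases q with q | q <;> exact (hs trivial).elim
  rcases q with ⟨z', b⟩ | q
  swap
  · exact (hs trivial).elim
  have hz : z ≠ z' := hs
  obtain ⟨A, ⟨hA, hzA, hzA'⟩, hu⟩ := W.pairCover _ _ hz
  have hlz : l A z ≠ l A z' := fun h => hz (hl A hA hzA hzA' h)
  obtain ⟨c, ⟨hc, rfl, rfl⟩, hcu⟩ := hC _ _ hlz a b
  refine ⟨A.image fun t => .inl (t, c (l A t)), ⟨⟨A, hA, c, hc, rfl⟩,
    Finset.mem_image.2 ⟨z, hzA, rfl⟩, Finset.mem_image.2 ⟨z', hzA', rfl⟩⟩, ?_⟩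
  rintro _ ⟨⟨A', hA', c', hc', rfl⟩, hp, hq⟩
  obtain ⟨t, ht, e⟩ := Finset.mem_image.1 hp
  obtain ⟨t', ht', e'⟩ := Finset.mem_image.1 hq
  simp only [Sum.inl.injEq, Prod.mk.injEq] at e e'
  obtain ⟨rfl, e⟩ := e
  obtain ⟨rfl, e'⟩ := e'
  obtain rfl : A' = A := hu A' ⟨hA', ht, ht'⟩
  obtain rfl : c' = c := hcu c' ⟨hc', e, e'⟩
  rfl

open Classical in
/-- The product design on `(W × (Y \ X)) ∪ X`. -/
noncomputable def prodDesign (W : Design (Fin w) k) (Y : Design (Fin y) k)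
    (hsub : IsSubdesign Y X) (C : Set (Fin k → {a : Fin y // a ∉ X}))
    (hC : ∀ i j : Fin k, i ≠ j → ∀ a b, ∃! c, c ∈ C ∧ c i = a ∧ c j = b)
    (l : Finset (Fin w) → Fin w → Fin k) (hl : ∀ A ∈ W.blocks, Set.InjOn (l A) A) :
    Design (Pt w X) k where
  blocks := Finset.univ.filter fun B => IsCopyBlock Y X B ∨ IsArrayBlock W X C l B
  blockSize B hB := by
    rcases (Finset.mem_filter.1 hB).2 with h | h
    · exact h.card
    · exact h.card
  pairCover p q hpq := by
    simp only [Finset.mem_filter, Finset.mem_univ, true_and]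
    by_cases hs : SameCopy p q
    · obtain ⟨B, ⟨hB, hp, hq⟩, hu⟩ := existsUnique_copyBlock Y hsub hpq hs
      refine ⟨B, ⟨.inl hB, hp, hq⟩, ?_⟩
      rintro B' ⟨hB' | hB', hp', hq'⟩
      · exact hu B' ⟨hB', hp', hq'⟩
      · exact (hpq (hB'.eq_of_sameCopy hp' hq' hs)).elim
    · obtain ⟨B, ⟨hB, hp, hq⟩, hu⟩ := existsUnique_arrayBlock W hC hl hs
      refine ⟨B, ⟨.inr hB, hp, hq⟩, ?_⟩
      rintro B' ⟨hB' | hB', hp', hq'⟩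
      · exact (hs (hB'.2 p hp' q hq')).elim
      · exact hu B' ⟨hB', hp', hq'⟩

/-! ### The group action -/

/-- Permutations of the points of `W` act on the `W`-coordinate. -/
def act (w : ℕ) {y : ℕ} (X : Finset (Fin y)) : Equiv.Perm (Fin w) →* Equiv.Perm (Pt w X) where
  toFun g := Equiv.sumCongr (Equiv.prodCongr g 1) 1
  map_one' := by
    ext p
    rcases p with p | p <;> rfl
  map_mul' g h := by
    ext p
    rcases p with p | p <;> rfl

@[simp] lemma act_inl (g : Equiv.Perm (Fin w)) (u : Fin w × {a : Fin y // a ∉ X}) :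
    act w X g (.inl u) = .inl (g u.1, u.2) := rfl

@[simp] lemma act_inr (g : Equiv.Perm (Fin w)) (a : {a : Fin y // a ∈ X}) :
    act w X g (.inr a) = .inr a := rfl

lemma proj_act (g : Equiv.Perm (Fin w)) (p : Pt w X) : proj (act w X g p) = proj p := by
  rcases p with p | p <;> rfl

lemma SameCopy.map_act {p q : Pt w X} (h : SameCopy p q) (g : Equiv.Perm (Fin w)) :
    SameCopy (act w X g p) (act w X g q) := by
  rcases p with p | p <;> rcases q with q | q <;> simp_all [SameCopy]

lemma IsCopyBlock.image_act {Y : Design (Fin y) k} {B : Finset (Pt w X)} (h : IsCopyBlock Y X B)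
    (g : Equiv.Perm (Fin w)) : IsCopyBlock Y X (B.image (act w X g)) := by
  constructor
  · rw [Finset.image_image]
    have : (proj ∘ act w X g : Pt w X → Fin y) = proj := funext (proj_act g)
    rw [this]
    exact h.1
  · intro p' hp' q' hq'
    obtain ⟨p, hp, rfl⟩ := Finset.mem_image.1 hp'
    obtain ⟨q, hq, rfl⟩ := Finset.mem_image.1 hq'
    exact (h.2 p hp q hq).map_act g

/-- The invariance of the labelling `l` makes the action carry the array block of `A` and `c` to the
array block of `g A` and the same `c`. -/
lemma IsArrayBlock.image_act {W : Design (Fin w) k} {C : Set (Fin k → {a : Fin y // a ∉ X})}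
    {l : Finset (Fin w) → Fin w → Fin k} {B : Finset (Pt w X)} (h : IsArrayBlock W X C l B)
    {g : Equiv.Perm (Fin w)} (hg : IsAuto W g)
    (hl : ∀ A ∈ W.blocks, ∀ z ∈ A, l (A.image g) (g z) = l A z) :
    IsArrayBlock W X C l (B.image (act w X g)) := by
  obtain ⟨A, hA, c, hc, rfl⟩ := h
  refine ⟨A.image g, (hg A).1 hA, c, hc, ?_⟩
  rw [Finset.image_image, Finset.image_image]
  refine Finset.image_congr fun z hz => ?_
  simp [hl A hA z hz]

/-- A copy block is fixed pointwise by any permutation of `W` that stabilizes it. -/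
lemma IsCopyBlock.fix {Y : Design (Fin y) k} {B : Finset (Pt w X)} (h : IsCopyBlock Y X B)
    {g : Equiv.Perm (Fin w)} (hB : B.image (act w X g) = B) :
    ∀ p ∈ B, act w X g p = p := fun p hp =>
  h.injOn (hB ▸ Finset.mem_image_of_mem _ hp) hp (proj_act g p)

/-- An array block over `A` can only be stabilized by stabilizing `A`, so `1`-blockedness on `W`
passes to array blocks. -/
lemma IsArrayBlock.fix {W : Design (Fin w) k} {C : Set (Fin k → {a : Fin y // a ∉ X})}
    {l : Finset (Fin w) → Fin w → Fin k} {B : Finset (Pt w X)} (h : IsArrayBlock W X C l B)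
    {g : Equiv.Perm (Fin w)}
    (hblocked : ∀ A ∈ W.blocks, A.image g = A → ∀ z ∈ A, g z = z)
    (hB : B.image (act w X g) = B) :
    ∀ p ∈ B, act w X g p = p := by
  obtain ⟨A, hA, c, hc, rfl⟩ := h
  have hgA : A.image g = A := by
    refine Finset.eq_of_subset_of_card_le (fun t ht => ?_)
      (Finset.card_image_of_injective _ g.injective).ge
    obtain ⟨z, hz, rfl⟩ := Finset.mem_image.1 ht
    have := Finset.mem_image_of_mem (act w X g)
      (Finset.mem_image_of_mem (fun z => (Sum.inl (z, c (l A z)) : Pt w X)) hz)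
    rw [hB] at this
    obtain ⟨t, ht, e⟩ := Finset.mem_image.1 this
    simp only [act_inl, Sum.inl.injEq, Prod.mk.injEq] at e
    exact e.1 ▸ ht
  intro p hp
  obtain ⟨z, hz, rfl⟩ := Finset.mem_image.1 hp
  simp [hblocked A hA hgA z hz]

end

/-! ### Transport to another point set -/

/-- Transport of a design along a bijection of point sets. -/
def Design.transport {α β : Type} [DecidableEq α] [DecidableEq β] {k : ℕ} (D : Design α k)
    (e : α ≃ β) : Design β k where
  blocks := D.blocks.image (Finset.image e)
  blockSize B hB := by
    obtain ⟨A, hA, rfl⟩ := Finset.mem_image.1 hB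
    rw [Finset.card_image_of_injective _ e.injective, D.blockSize A hA]
  pairCover p q hpq := by
    obtain ⟨A, ⟨hA, hp, hq⟩, hu⟩ := D.pairCover (e.symm p) (e.symm q) (by simpa using hpq)
    refine ⟨A.image e, ⟨Finset.mem_image_of_mem _ hA, ?_, ?_⟩, ?_⟩
    · exact Finset.mem_image.2 ⟨_, hp, by simp⟩
    · exact Finset.mem_image.2 ⟨_, hq, by simp⟩
    · rintro B ⟨hB, hpB, hqB⟩
      obtain ⟨A', hA', rfl⟩ := Finset.mem_image.1 hB
      obtain ⟨p', hp', rfl⟩ := Finset.mem_image.1 hpB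
      obtain ⟨q', hq', rfl⟩ := Finset.mem_image.1 hqB
      rw [hu A' ⟨hA', by simpa using hp', by simpa using hq'⟩]

/-- Since inverses are available, it suffices that each group element maps blocks to blocks. -/
lemma isAuto_of_forall {Γ α : Type} [Group Γ] [DecidableEq α] {k : ℕ} (D : Design α k)
    (f : Γ →* Equiv.Perm α) (h : ∀ g, ∀ B ∈ D.blocks, B.image (f g) ∈ D.blocks) (g : Γ) :
    IsAuto D (f g) := by
  refine fun B => ⟨h g B, fun hB => ?_⟩
  have := h g⁻¹ _ hB
  rwa [Finset.image_image, ← Equiv.Perm.coe_mul, ← map_mul, inv_mul_cancel, map_one,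
    Equiv.Perm.coe_one, Finset.image_id] at this

lemma image_permCongr {α β : Type} [DecidableEq α] [DecidableEq β] (e : α ≃ β)
    (h : Equiv.Perm α) (A : Finset α) :
    (A.image e).image (e.permCongrHom h) = (A.image h).image e := by
  simp [Finset.image_image, Function.comp_def]

/-- Let `k ≥ 3` and let `G` be a `1`-blocked group of automorphisms of a
`2`-`(w,k,1)` design `W`. Given a `2`-`(y,k,1)` design with an `x`-point
subdesign and a transversal design `TD(k, y-x)`, there is a
`2`-`(w(y-x)+x, k, 1)` design `U` whose automorphism group contains a
`1`-blocked subgroup isomorphic to `G`. -/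
theorem statement16 (k w x y : ℕ) (hk : 3 ≤ k)
    (W : Design (Fin w) k) (G : Subgroup (Equiv.Perm (Fin w)))
    (hauto : ∀ g ∈ G, IsAuto W g)
    (hblocked : ∀ g ∈ G, ∀ B ∈ W.blocks, B.image g = B → ∀ z ∈ B, g z = z)
    (Y : Design (Fin y) k) (X : Finset (Fin y)) (hX : X.card = x)
    (hsub : IsSubdesign Y X)
    (T : TransversalDesign (Fin (k * (y - x))) k (y - x)) :
    ∃ (U : Design (Fin (w * (y - x) + x)) k)
      (f : G →* Equiv.Perm (Fin (w * (y - x) + x))),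
      Function.Injective f ∧ (∀ g : G, IsAuto U (f g)) ∧
      (∀ g : G, ∀ B ∈ U.blocks, B.image (f g) = B → ∀ z ∈ B, (f g) z = z) := by
  classical
  have hn := pos_of_transversal hk T
  have hN : Fintype.card {a : Fin y // a ∉ X} = y - x := by
    rw [Fintype.card_subtype_compl]
    simp [hX]
  obtain ⟨C, hC⟩ := exists_array T {a : Fin y // a ∉ X} hN
  obtain ⟨l, hl⟩ := exists_labelling (by omega) W G hauto hblocked
  let D := prodDesign W Y hsub C hC l fun A hA => (hl A hA).1
  have hD : ∀ B, B ∈ D.blocks ↔ IsCopyBlock Y X B ∨ IsArrayBlock W X C l B := fun B => by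
    simp [D, prodDesign]
  have e : Pt w X ≃ Fin (w * (y - x) + x) := Fintype.equivFinOfCardEq (by
    rw [Fintype.card_sum, Fintype.card_prod, hN]
    simp [hX])
  let f : G →* Equiv.Perm (Fin (w * (y - x) + x)) :=
    (e.permCongrHom.toMonoidHom.comp (act w X)).comp G.subtype
  have hf : ∀ g : G, f g = e.permCongrHom (act w X g) := fun _ => rfl
  refine ⟨D.transport e, f, ?_, isAuto_of_forall _ f ?_, ?_⟩
  · intro g h hgh
    rw [hf, hf] at hgh
    have h1 := e.permCongrHom.injective hgh
    obtain ⟨a⟩ : Nonempty {a : Fin y // a ∉ X} := Fintype.card_pos_iff.1 (hN ▸ hn)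
    ext z
    have h2 := Equiv.congr_fun h1 (.inl (z, a))
    simp only [act_inl, Sum.inl.injEq, Prod.mk.injEq, and_true] at h2
    rw [h2]
  · intro g B hB
    obtain ⟨A, hA, rfl⟩ := Finset.mem_image.1 hB
    rw [hf, image_permCongr]
    refine Finset.mem_image_of_mem _ ((hD _).2 ?_)
    rcases (hD A).1 hA with h | h
    · exact .inl (h.image_act g)
    · exact .inr (h.image_act (hauto g g.2) fun A hA => (hl A hA).2 g g.2)
  · intro g B hB hBg z hz
    obtain ⟨A, hA, rfl⟩ := Finset.mem_image.1 hB
    rw [hf, image_permCongr] at hBg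
    have hAg := Finset.image_injective e.injective hBg
    obtain ⟨p, hp, rfl⟩ := Finset.mem_image.1 hz
    have hfix : act w X g p = p := by
      rcases (hD A).1 hA with h | h
      · exact h.fix hAg p hp
      · exact h.fix (hblocked g g.2) hAg p hp
    simp [hf, hfix]
end
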